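/- arXiv:2010.13249 — 4 statements merged into one kernel-verified Lean document; each statement's English description precedes it below -/
import Mathlib

section
/- Every finite set S ⊆ ℕ^d with |S| ≤ ∑_{i=1}^{d} i^i is numerically coverable. -/
/-- A finite set `S ⊆ ℕ^d` is coverable if it can be partitioned into parts
`P 0, …, P (d-1)` such that any two distinct points in part `P i` differ in some
coordinate other than `i` (i.e. each part has at most one point on every line
parallel to the `i`-th coordinate axis). -/
def Coverable {d : ℕ} (S : Finset (Fin d → ℕ)) : Prop :=
  ∃ P : Fin d → Finset (Fin d → ℕ),
    (∀ i, P i ⊆ S) ∧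
    (∀ x ∈ S, ∃! i, x ∈ P i) ∧
    (∀ i, ∀ x ∈ P i, ∀ y ∈ P i, x ≠ y → ∃ j, j ≠ i ∧ x j ≠ y j)

/-- The projection of `S ⊆ ℕ^d` onto the coordinate hyperplane obtained by deleting the
`i`-th coordinate (realized by setting the `i`-th coordinate to `0`). -/
def coordProj {d : ℕ} (i : Fin d) (S : Finset (Fin d → ℕ)) : Finset (Fin d → ℕ) :=
  S.image (fun x => Function.update x i 0)

/-- A finite set `S ⊆ ℕ^d` is numerically coverable if
`∑_{i=1}^d |π_i(S)| ≥ |S|`. -/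
def NumericallyCoverable {d : ℕ} (S : Finset (Fin d → ℕ)) : Prop :=
  S.card ≤ ∑ i : Fin d, (coordProj i S).card

/-!
Write `f d n` for the sum of the sizes of the `d` projections of the first `n` points of `ℕ^d` in
the cube order, which runs through balanced boxes (quasi-cubes), each obtained from the previous
one by adding a face. This initial segment has the smallest projections among all `n`-point sets.
Indeed, choose an axis along which the set has the most slices, and a smallest slice `T` there.
Projections along the other axes separate `T` from the remaining points, so by induction it
suffices that `f d (n + t) ≤ f d n + f (d - 1) t` when `t` is the size of `T`.

Peeling off faces gives `n ≤ f d n` for `n ≤ d ^ d`. Beyond that, `d ^ d + r` points form a full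
cube together with `r` points in one face, whence `f d (d ^ d + r) = f d (d ^ d) + f (d - 1) r`, and
the bound for `r ≤ ∑ i < d, i ^ i` follows by induction on `d`.
-/

/-- The cardinality of the `m`-th quasi-cube in dimension `d`: the box whose `d` side lengths
differ by at most one and have sum `d + m`. The recursion splits off a shortest side,
of length `m / d + 1`. -/
def quasiCubeCard : ℕ → ℕ → ℕ
  | 0, _ => 1
  | d + 1, m => (m / (d + 1) + 1) * quasiCubeCard d (m - m / (d + 1))

/-- The cardinality of the largest face of the `m`-th quasi-cube in dimension `d + 1`, which is
the `d`-dimensional layer whose addition turns it into the `(m + 1)`-st quasi-cube. -/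
def quasiCubeFace (d m : ℕ) : ℕ := quasiCubeCard d (m - m / (d + 1))

lemma quasiCubeCard_succ (d m : ℕ) :
    quasiCubeCard (d + 1) m = (m / (d + 1) + 1) * quasiCubeFace d m := rfl

lemma quasiCubeFace_succ_of_dvd {d m : ℕ} (h : d + 1 ∣ m + 1) :
    quasiCubeFace d (m + 1) = quasiCubeFace d m := by
  rw [quasiCubeFace, quasiCubeFace, Nat.succ_div_of_dvd h, Nat.add_sub_add_right]

lemma sub_div_div_of_not_dvd {d m : ℕ} (h : ¬ d + 2 ∣ m + 1) :
    (m - m / (d + 2)) / (d + 1) = m / (d + 2) := by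
  have hm : (d + 2) * (m / (d + 2)) + m % (d + 2) = m := Nat.div_add_mod m (d + 2)
  have hmod : m % (d + 2) ≠ d + 1 := fun hmod ↦ h ⟨m / (d + 2) + 1, by rw [mul_add]; omega⟩
  have hlt : m % (d + 2) < d + 2 := Nat.mod_lt m (by omega)
  have hsub : m - m / (d + 2) = (d + 1) * (m / (d + 2)) + m % (d + 2) := by
    rw [add_mul] at hm ⊢
    omega
  rw [hsub, Nat.mul_add_div d.succ_pos, Nat.div_eq_of_lt (show m % (d + 2) < d + 1 by omega),
    add_zero]

lemma quasiCubeFace_succ_of_not_dvd_eq_quasiCubeCard {d m : ℕ} (h : ¬ d + 1 ∣ m + 1) :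
    quasiCubeFace d (m + 1) = quasiCubeCard d (m - m / (d + 1) + 1) := by
  rw [quasiCubeFace, Nat.succ_div_of_not_dvd h, Nat.sub_add_comm (Nat.div_le_self m (d + 1))]

lemma quasiCubeFace_succ_eq_mul_of_not_dvd {d m : ℕ} (h : ¬ d + 2 ∣ m + 1) :
    quasiCubeFace (d + 1) m = (m / (d + 2) + 1) * quasiCubeFace d (m - m / (d + 2)) := by
  rw [quasiCubeFace, quasiCubeCard_succ, sub_div_div_of_not_dvd h]

lemma quasiCubeCard_add_one (d m : ℕ) :
    quasiCubeCard (d + 1) (m + 1) = quasiCubeCard (d + 1) m + quasiCubeFace d m := by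
  induction d generalizing m with
  | zero => simp [quasiCubeCard, quasiCubeFace]
  | succ d ih =>
    rw [quasiCubeCard_succ, quasiCubeCard_succ]
    by_cases h : d + 2 ∣ m + 1
    · rw [quasiCubeFace_succ_of_dvd h, Nat.succ_div_of_dvd h]
      ring
    · rw [quasiCubeFace_succ_of_not_dvd_eq_quasiCubeCard h, Nat.succ_div_of_not_dvd h, ih,
        ← quasiCubeFace, quasiCubeFace_succ_eq_mul_of_not_dvd h]
      ring

lemma quasiCubeCard_succ_add_one (d m : ℕ) :
    quasiCubeCard (d + 1) (m + 1) = (m / (d + 1) + 2) * quasiCubeFace d m := by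
  rw [quasiCubeCard_add_one, quasiCubeCard_succ]
  ring

lemma quasiCubeFace_succ_of_not_dvd {d m : ℕ} (h : ¬ d + 2 ∣ m + 1) :
    quasiCubeFace (d + 1) (m + 1) =
      quasiCubeFace (d + 1) m + quasiCubeFace d (m - m / (d + 2)) := by
  rw [quasiCubeFace_succ_of_not_dvd_eq_quasiCubeCard h, quasiCubeCard_add_one]
  rfl

lemma quasiCubeCard_zero_right (d : ℕ) : quasiCubeCard d 0 = 1 := by
  induction d with
  | zero => rfl
  | succ d ih => simp [quasiCubeCard, ih]

lemma quasiCubeFace_zero_right (d : ℕ) : quasiCubeFace d 0 = 1 := by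
  rw [quasiCubeFace, Nat.zero_sub, quasiCubeCard_zero_right]

lemma quasiCubeCard_mono (d : ℕ) : Monotone (quasiCubeCard d) := by
  cases d with
  | zero => exact fun _ _ _ ↦ le_rfl
  | succ d => exact monotone_nat_of_le_succ fun m ↦ by rw [quasiCubeCard_add_one]; omega

lemma quasiCubeFace_mono (d : ℕ) : Monotone (quasiCubeFace d) := by
  refine monotone_nat_of_le_succ fun m ↦ ?_
  by_cases h : d + 1 ∣ m + 1
  · exact (quasiCubeFace_succ_of_dvd h).ge
  · rw [quasiCubeFace_succ_of_not_dvd_eq_quasiCubeCard h]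
    exact quasiCubeCard_mono d (Nat.le_succ _)

lemma quasiCubeCard_pos (d m : ℕ) : 0 < quasiCubeCard d m := by
  rw [← Nat.succ_le_iff, Nat.succ_eq_add_one, zero_add, ← quasiCubeCard_zero_right d]
  exact quasiCubeCard_mono d (Nat.zero_le m)

lemma quasiCubeCard_strictMono (d : ℕ) : StrictMono (quasiCubeCard (d + 1)) :=
  strictMono_nat_of_lt_succ fun m ↦ by
    have := quasiCubeCard_pos d (m - m / (d + 1))
    rw [quasiCubeCard_add_one, quasiCubeFace]
    omega

lemma quasiCubeFace_mul (d a : ℕ) : quasiCubeFace d ((d + 1) * a) = quasiCubeCard d (d * a) := by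
  rw [quasiCubeFace, Nat.mul_div_cancel_left a d.succ_pos, add_mul, one_mul, Nat.add_sub_cancel]

lemma quasiCubeCard_mul (d a : ℕ) : quasiCubeCard d (d * a) = (a + 1) ^ d := by
  induction d with
  | zero => rfl
  | succ d ih =>
    rw [quasiCubeCard_succ, quasiCubeFace_mul, ih, Nat.mul_div_cancel_left a d.succ_pos, pow_succ']

lemma quasiCubeFace_le_pow (d m : ℕ) : quasiCubeFace d m ≤ (m / (d + 1) + 2) ^ d := by
  rw [← quasiCubeCard_mul d (m / (d + 1) + 1), ← quasiCubeFace_mul]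
  exact quasiCubeFace_mono d (Nat.lt_mul_div_succ m d.succ_pos).le

lemma pow_le_quasiCubeCard (d m : ℕ) : (m / (d + 1) + 1) ^ (d + 1) ≤ quasiCubeCard (d + 1) m := by
  rw [← quasiCubeCard_mul]
  exact quasiCubeCard_mono _ (Nat.mul_div_le m (d + 1))

lemma div_add_two_le_of_quasiCubeCard_lt_pow {d m k : ℕ}
    (h : quasiCubeCard (d + 1) m < k ^ (d + 1)) : m / (d + 1) + 2 ≤ k :=
  lt_of_pow_lt_pow_left₀ (d + 1) (Nat.zero_le k) ((pow_le_quasiCubeCard d m).trans_lt h)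

lemma exists_eq_quasiCubeCard_add (d : ℕ) {n : ℕ} (hn : 2 ≤ n) :
    ∃ m r, n = quasiCubeCard (d + 1) m + r ∧ 0 < r ∧ r ≤ quasiCubeFace d m := by
  have hex : ∃ m, n ≤ quasiCubeCard (d + 1) m := ⟨n, (quasiCubeCard_strictMono d).le_apply⟩
  have hspec := Nat.find_spec hex
  obtain ⟨m, hm⟩ : ∃ m, Nat.find hex = m + 1 := by
    refine Nat.exists_eq_succ_of_ne_zero fun h ↦ ?_
    rw [h, quasiCubeCard_zero_right] at hspec
    omega
  have hmin : ¬ n ≤ quasiCubeCard (d + 1) m := Nat.find_min hex (by omega)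
  rw [hm, quasiCubeCard_add_one] at hspec
  exact ⟨m, n - quasiCubeCard (d + 1) m, by omega, by omega, by omega⟩

/-- The index of the last quasi-cube in dimension `d` with at most `n` points, where `0 < d`
and `0 < n`. -/
def quasiCubeIndex (d n : ℕ) : ℕ := Nat.findGreatest (fun m ↦ quasiCubeCard d m ≤ n) n

lemma quasiCubeIndex_eq {d n m : ℕ} (hle : quasiCubeCard (d + 1) m ≤ n)
    (hlt : n < quasiCubeCard (d + 1) (m + 1)) : quasiCubeIndex (d + 1) n = m := by
  have hmn : m ≤ n := (quasiCubeCard_strictMono d).le_apply.trans hle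
  have hspec : quasiCubeCard (d + 1) (quasiCubeIndex (d + 1) n) ≤ n :=
    Nat.findGreatest_spec (P := fun m ↦ quasiCubeCard (d + 1) m ≤ n) hmn hle
  exact le_antisymm
    (Nat.lt_succ_iff.mp ((quasiCubeCard_strictMono d).lt_iff_lt.mp (hspec.trans_lt hlt)))
    (Nat.le_findGreatest hmn hle)

/-- The number of zero coordinates of the `n`-th point of `ℕ^d` in the cube order, counting from
zero. The cube order starts at the origin and grows one quasi-cube into the next by listing the
added face, at positive height, in the cube order of dimension one less. -/
def zeroCoords : ℕ → ℕ → ℕ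
  | 0, _ => 0
  | d + 1, n =>
    if n = 0 then d + 1
    else zeroCoords d (n - quasiCubeCard (d + 1) (quasiCubeIndex (d + 1) n))

lemma zeroCoords_zero_right (d : ℕ) : zeroCoords d 0 = d := by
  cases d <;> simp [zeroCoords]

lemma zeroCoords_quasiCubeCard_add {d m r : ℕ} (hr : r < quasiCubeFace d m) :
    zeroCoords (d + 1) (quasiCubeCard (d + 1) m + r) = zeroCoords d r := by
  have hpos := quasiCubeCard_pos (d + 1) m
  rw [zeroCoords, if_neg (by omega), quasiCubeIndex_eq (Nat.le_add_right _ r)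
    (by rw [quasiCubeCard_add_one]; omega), Nat.add_sub_cancel_left]

/-- The sum of the cardinalities of the `d` projections of the set of the first `n` points of
`ℕ^d` in the cube order. Since this set is a lower set, each of its points is counted once for
every coordinate of it that vanishes. -/
def segmentProjSum (d n : ℕ) : ℕ := ∑ i ∈ Finset.range n, zeroCoords d i

lemma segmentProjSum_zero_left (n : ℕ) : segmentProjSum 0 n = 0 := by
  simp [segmentProjSum, zeroCoords]

lemma segmentProjSum_zero_right (d : ℕ) : segmentProjSum d 0 = 0 := rfl

lemma segmentProjSum_one_right (d : ℕ) : segmentProjSum d 1 = d := by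
  rw [segmentProjSum, Finset.sum_range_one, zeroCoords_zero_right]

lemma segmentProjSum_quasiCubeCard_add {d m r : ℕ} (hr : r ≤ quasiCubeFace d m) :
    segmentProjSum (d + 1) (quasiCubeCard (d + 1) m + r) =
      segmentProjSum (d + 1) (quasiCubeCard (d + 1) m) + segmentProjSum d r := by
  rw [segmentProjSum, Finset.sum_range_add]
  refine congrArg _ (Finset.sum_congr rfl fun i hi ↦ ?_)
  exact zeroCoords_quasiCubeCard_add ((Finset.mem_range.mp hi).trans_le hr)

lemma segmentProjSum_quasiCubeCard_succ (d m : ℕ) :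
    segmentProjSum (d + 1) (quasiCubeCard (d + 1) (m + 1)) =
      segmentProjSum (d + 1) (quasiCubeCard (d + 1) m) + segmentProjSum d (quasiCubeFace d m) := by
  rw [quasiCubeCard_add_one, segmentProjSum_quasiCubeCard_add le_rfl]

/-- Submodularity of `segmentProjSum d` on pairs of segments whose join is a quasi-cube. Together
with subadditivity it is what carries the isoperimetric estimates from one dimension to the
next. -/
def SubmodularAtQuasiCubes (d : ℕ) : Prop :=
  ∀ ⦃m u v w : ℕ⦄, u + v + w = quasiCubeCard d m →
    segmentProjSum d (u + v + w) + segmentProjSum d u ≤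
      segmentProjSum d (u + v) + segmentProjSum d (u + w)

/-- Subadditivity of `segmentProjSum d`, the companion of `SubmodularAtQuasiCubes d` in the
induction on `d`. -/
def SubadditiveSegments (d : ℕ) : Prop :=
  ∀ x y : ℕ, segmentProjSum d (x + y) ≤ segmentProjSum d x + segmentProjSum d y

lemma SubmodularAtQuasiCubes.segmentProjSum_face_le {d m s y z : ℕ}
    (hmod : SubmodularAtQuasiCubes d) (hyz : y + z = quasiCubeFace d m) (hsz : s ≤ z) :
    segmentProjSum d (y + z) + segmentProjSum d s ≤
      segmentProjSum d (s + y) + segmentProjSum d z := by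
  have h := hmod (m := m - m / (d + 1)) (u := s) (v := y) (w := z - s)
    (by rw [← quasiCubeFace]; omega)
  rwa [show s + y + (z - s) = y + z by omega, Nat.add_sub_cancel' hsz] at h

lemma segmentProjSum_face_increment_le {d : ℕ} (hmod : SubmodularAtQuasiCubes d)
    (hadd : SubadditiveSegments d) {m u y z : ℕ} (hyz : y + z = quasiCubeFace d m)
    (hu : u + y ≤ quasiCubeCard (d + 1) (m + 1)) :
    segmentProjSum (d + 1) u + segmentProjSum d (y + z) ≤
      segmentProjSum (d + 1) (u + y) + segmentProjSum d z := by
  induction y using Nat.strong_induction_on generalizing u z with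
  | _ y ih =>
  rcases Nat.eq_zero_or_pos y with rfl | hy
  · rw [zero_add, add_zero]
  rcases Nat.lt_or_ge (u + y) 2 with hlt | hge
  · obtain ⟨rfl, rfl⟩ : u = 0 ∧ y = 1 := by omega
    have h := hadd 1 z
    rw [segmentProjSum_one_right] at h
    rw [zero_add, segmentProjSum_zero_right, segmentProjSum_one_right]
    omega
  obtain ⟨i, r, hir, hr0, hr⟩ := exists_eq_quasiCubeCard_add d hge
  have him : i ≤ m := Nat.lt_succ_iff.mp <|
    (quasiCubeCard_strictMono d).lt_iff_lt.mp (show _ < quasiCubeCard (d + 1) (m + 1) by omega)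
  have hface := quasiCubeFace_mono d him
  have hlast := segmentProjSum_quasiCubeCard_add hr
  rw [← hir] at hlast
  rcases le_total y r with hyr | hry
  · obtain ⟨s, rfl⟩ := Nat.exists_eq_add_of_le' hyr
    have hs := segmentProjSum_quasiCubeCard_add (show s ≤ quasiCubeFace d i by omega)
    have h := hmod.segmentProjSum_face_le hyz (show s ≤ z by omega)
    rw [show u = quasiCubeCard (d + 1) i + s by omega] at hlast ⊢
    omega
  · obtain ⟨y, rfl⟩ := Nat.exists_eq_add_of_le' hry
    have h := ih y (by omega) (u := u) (z := r + z) (by omega) (by omega)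
    have hsub := hadd r z
    rw [show u + y = quasiCubeCard (d + 1) i by omega, ← add_assoc] at h
    omega

lemma submodularAtQuasiCubes_succ {d : ℕ} (hmod : SubmodularAtQuasiCubes d)
    (hadd : SubadditiveSegments d) : SubmodularAtQuasiCubes (d + 1) := by
  intro m
  induction m with
  | zero =>
    intro u v w h
    rw [quasiCubeCard_zero_right] at h
    rcases (show v = 0 ∨ w = 0 by omega) with rfl | rfl <;> simp only [add_zero] <;> omega
  | succ m ih =>
    have of_le_face : ∀ ⦃u v w : ℕ⦄, u + v + w = quasiCubeCard (d + 1) (m + 1) →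
        v ≤ quasiCubeFace d m →
        segmentProjSum (d + 1) (u + v + w) + segmentProjSum (d + 1) u ≤
          segmentProjSum (d + 1) (u + v) + segmentProjSum (d + 1) (u + w) := by
      intro u v w h hv
      obtain ⟨z, hz⟩ := Nat.exists_eq_add_of_le hv
      have hinc := segmentProjSum_face_increment_le hmod hadd hz.symm (show u + v ≤ _ by omega)
      have hw : u + w = quasiCubeCard (d + 1) m + z := by rw [quasiCubeCard_add_one] at h; omega
      rw [h, segmentProjSum_quasiCubeCard_succ, hw, segmentProjSum_quasiCubeCard_add (by omega), hz]
      omega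
    intro u v w h
    rcases le_total v (quasiCubeFace d m) with hv | hv
    · exact of_le_face h hv
    · obtain ⟨v, rfl⟩ := Nat.exists_eq_add_of_le' hv
      have hsmall : u + v + w = quasiCubeCard (d + 1) m := by
        rw [quasiCubeCard_add_one] at h; omega
      have hrest := ih hsmall
      have hface := of_le_face (u := u + v) (v := quasiCubeFace d m) (w := w) (by omega) le_rfl
      rw [add_assoc u v] at hface
      omega

lemma segmentProjSum_add_le_of_le_face {d : ℕ} (hmod : SubmodularAtQuasiCubes d)
    (hadd : SubadditiveSegments d) {i n t : ℕ} (hi : quasiCubeCard (d + 1) i ≤ n)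
    (ht : t ≤ quasiCubeFace d i) :
    segmentProjSum (d + 1) (n + t) ≤ segmentProjSum (d + 1) n + segmentProjSum d t := by
  rcases Nat.eq_zero_or_pos t with rfl | ht0
  · exact Nat.le_add_right _ _
  have hpos := quasiCubeCard_pos (d + 1) i
  obtain ⟨m, r, hmr, -, hr⟩ := exists_eq_quasiCubeCard_add d (show 2 ≤ n + t by omega)
  rw [hmr, segmentProjSum_quasiCubeCard_add hr]
  rcases le_or_gt t r with htr | hrt
  · obtain ⟨s, rfl⟩ := Nat.exists_eq_add_of_le' htr
    have hsub := hadd s t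
    rw [show n = quasiCubeCard (d + 1) m + s by omega,
      segmentProjSum_quasiCubeCard_add (by omega)]
    omega
  · -- Of the last `t` points, `r` lie outside the `m`-th quasi-cube and the others end its last
    -- face.
    have him : i < m := (quasiCubeCard_strictMono d).lt_iff_lt.mp (by omega)
    obtain ⟨m, rfl⟩ := Nat.exists_eq_succ_of_ne_zero (Nat.ne_zero_of_lt him)
    have hface := quasiCubeFace_mono d (Nat.lt_succ_iff.mp him)
    obtain ⟨v, rfl⟩ := Nat.exists_eq_add_of_lt hrt
    obtain ⟨z, hz⟩ := Nat.exists_eq_add_of_le (show v + 1 ≤ quasiCubeFace d m by omega)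
    have h := hmod.segmentProjSum_face_le hz.symm (show r ≤ z by omega)
    have hn : n = quasiCubeCard (d + 1) m + z := by rw [quasiCubeCard_add_one] at hmr; omega
    rw [Nat.succ_eq_add_one, segmentProjSum_quasiCubeCard_succ, hz, hn,
      segmentProjSum_quasiCubeCard_add (by omega)]
    rw [← add_assoc] at h
    omega

lemma segmentProjSum_add_one_le {d : ℕ} (hmod : SubmodularAtQuasiCubes d)
    (hadd : SubadditiveSegments d) {n : ℕ} (hn : 0 < n) :
    segmentProjSum (d + 1) (n + 1) ≤ segmentProjSum (d + 1) n + d := by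
  have h := segmentProjSum_add_le_of_le_face hmod hadd (i := 0) (n := n) (t := 1)
    (by rwa [quasiCubeCard_zero_right]) (by rw [quasiCubeFace_zero_right])
  rwa [segmentProjSum_one_right] at h

lemma subadditiveSegments_succ {d : ℕ} (hmod : SubmodularAtQuasiCubes d)
    (hadd : SubadditiveSegments d) : SubadditiveSegments (d + 1) := by
  intro x y
  induction y using Nat.strong_induction_on with
  | _ y ih =>
  rcases Nat.lt_or_ge y 2 with hlt | hge
  · rcases Nat.eq_zero_or_pos x with rfl | hx
    · rw [zero_add]
      exact Nat.le_add_left _ _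
    have h := segmentProjSum_add_one_le hmod hadd hx
    interval_cases y
    · exact Nat.le_add_right _ _
    · rw [segmentProjSum_one_right]
      omega
  obtain ⟨i, r, rfl, hr0, hr⟩ := exists_eq_quasiCubeCard_add d hge
  have hinit := ih (quasiCubeCard (d + 1) i) (by omega)
  have hlast := segmentProjSum_add_le_of_le_face hmod hadd
    (Nat.le_add_left (quasiCubeCard (d + 1) i) x) hr
  rw [segmentProjSum_quasiCubeCard_add hr, ← add_assoc]
  omega

lemma submodularAtQuasiCubes_and_subadditiveSegments (d : ℕ) :
    SubmodularAtQuasiCubes d ∧ SubadditiveSegments d := by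
  induction d with
  | zero => simp [SubmodularAtQuasiCubes, SubadditiveSegments, segmentProjSum_zero_left]
  | succ d ih => exact ⟨submodularAtQuasiCubes_succ ih.1 ih.2, subadditiveSegments_succ ih.1 ih.2⟩

lemma exists_eq_quasiCubeCard_add_of_mul_le {d k n t : ℕ} (hn : 2 ≤ n) (hkt : k * t ≤ n)
    (hnk : n ≤ k ^ (d + 1)) :
    ∃ m r, n = quasiCubeCard (d + 1) m + r ∧ 0 < r ∧ r ≤ quasiCubeFace d m ∧
      (m / (d + 1) + 2) * t ≤ n ∧ t ≤ quasiCubeFace d m := by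
  obtain ⟨m, r, hmr, hr0, hr⟩ := exists_eq_quasiCubeCard_add d hn
  have hk : m / (d + 1) + 2 ≤ k := div_add_two_le_of_quasiCubeCard_lt_pow (by omega)
  have hmt : (m / (d + 1) + 2) * t ≤ n := (Nat.mul_le_mul_right t hk).trans hkt
  refine ⟨m, r, hmr, hr0, hr, hmt, Nat.le_of_mul_le_mul_left (hmt.trans ?_) (Nat.succ_pos _)⟩
  rw [hmr, ← quasiCubeCard_succ_add_one, quasiCubeCard_add_one]
  exact Nat.add_le_add_left hr _

lemma segmentProjSum_add_face_add_le {d m q s : ℕ} (hq : q ≤ quasiCubeFace (d + 1) m)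
    (hs : s ≤ quasiCubeFace d (m - m / (d + 2)))
    (hqs : q + s ≤ quasiCubeFace (d + 1) (m + 1))
    (h : segmentProjSum (d + 1) (q + s) ≤ segmentProjSum (d + 1) q + segmentProjSum d s) :
    segmentProjSum (d + 2) (quasiCubeCard (d + 2) (m + 1) + (q + s)) ≤
      segmentProjSum (d + 2) (quasiCubeCard (d + 2) m + q) +
        segmentProjSum (d + 1) (quasiCubeFace (d + 1) m + s) := by
  have hface : segmentProjSum (d + 1) (quasiCubeFace (d + 1) m + s) =
      segmentProjSum (d + 1) (quasiCubeFace (d + 1) m) + segmentProjSum d s :=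
    segmentProjSum_quasiCubeCard_add hs
  rw [segmentProjSum_quasiCubeCard_add hqs, segmentProjSum_quasiCubeCard_succ, hface,
    segmentProjSum_quasiCubeCard_add hq]
  omega

lemma mul_le_and_le_pow_of_mul_face_add_le {d m r s : ℕ} (hdvd : ¬ d + 1 ∣ m + 1)
    (hr : r ≤ quasiCubeFace d (m + 1))
    (h : ((m + 1) / (d + 1) + 2) * (quasiCubeFace d m + s) ≤ quasiCubeCard (d + 1) (m + 1) + r) :
    (m / (d + 1) + 2) * s ≤ r ∧ r ≤ (m / (d + 1) + 2) ^ d := by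
  have hpow := quasiCubeFace_le_pow d (m + 1)
  rw [Nat.succ_div_of_not_dvd hdvd] at h hpow
  rw [mul_add, ← quasiCubeCard_succ_add_one] at h
  exact ⟨Nat.le_of_add_le_add_left h, hr.trans hpow⟩

/-- Meant for a set of size `n + t` that is cut into `k` slices, the smallest of size `t`, along an
axis with the largest number of slices. -/
theorem segmentProjSum_add_le {d k n t : ℕ} (hk : 2 ≤ k) (hkt : k * t ≤ n + t)
    (hnk : n + t ≤ k ^ (d + 1)) :
    segmentProjSum (d + 1) (n + t) ≤ segmentProjSum (d + 1) n + segmentProjSum d t := by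
  induction d generalizing k n t with
  | zero =>
    obtain ⟨hmod, hadd⟩ := submodularAtQuasiCubes_and_subadditiveSegments 0
    have ht : t ≤ 1 := by
      refine Nat.le_of_mul_le_mul_left (hkt.trans ?_) (Nat.zero_lt_of_lt hk)
      rwa [mul_one, ← pow_one k]
    interval_cases t
    · exact Nat.le_add_right _ _
    · exact segmentProjSum_add_one_le hmod hadd (by omega)
  | succ d ih =>
    obtain ⟨hmod, hadd⟩ := submodularAtQuasiCubes_and_subadditiveSegments (d + 1)
    rcases Nat.eq_zero_or_pos t with rfl | ht0
    · exact Nat.le_add_right _ _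
    have hge : 2 ≤ n + t := by nlinarith
    obtain ⟨m, r, hmr, hr0, hr, hmt, htm⟩ := exists_eq_quasiCubeCard_add_of_mul_le hge hkt hnk
    rcases le_or_gt t r with htr | hrt
    · exact segmentProjSum_add_le_of_le_face hmod hadd (by omega) htm
    obtain ⟨m, rfl⟩ : ∃ m', m = m' + 1 := by
      refine Nat.exists_eq_succ_of_ne_zero ?_
      rintro rfl
      rw [quasiCubeFace_zero_right] at htm
      omega
    have hcard := quasiCubeCard_add_one (d + 1) m
    rcases le_or_gt t (quasiCubeFace (d + 1) m) with htf | hft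
    · exact segmentProjSum_add_le_of_le_face hmod hadd (by omega) htf
    have hdvd : ¬ d + 2 ∣ m + 1 := fun h ↦ by
      rw [quasiCubeFace_succ_of_dvd h] at htm
      omega
    -- The excesses `s` of `t` over the previous face and `r` of `n + t` over the quasi-cube again
    -- satisfy the hypotheses, one dimension lower.
    obtain ⟨s, rfl⟩ := Nat.exists_eq_add_of_le hft.le
    obtain ⟨hsr, hrk⟩ := mul_le_and_le_pow_of_mul_face_add_le hdvd hr (hmr ▸ hmt)
    obtain ⟨q, rfl⟩ :=
      Nat.exists_eq_add_of_le' ((Nat.le_mul_of_pos_left s (Nat.succ_pos _)).trans hsr)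
    rw [hmr, show n = quasiCubeCard (d + 1 + 1) m + q by omega]
    rw [quasiCubeFace_succ_of_not_dvd hdvd] at htm
    exact segmentProjSum_add_face_add_le (by omega) (by omega) hr
      (ih (Nat.le_add_left 2 _) hsr hrk)

theorem segmentProjSum_quasiCubeCard (d m : ℕ) :
    segmentProjSum (d + 1) (quasiCubeCard (d + 1) m) =
      quasiCubeFace d m + (m / (d + 1) + 1) * segmentProjSum d (quasiCubeFace d m) := by
  induction d generalizing m with
  | zero =>
    have hface (m : ℕ) : quasiCubeFace 0 m = 1 := rfl
    induction m with
    | zero => rw [quasiCubeCard_zero_right, segmentProjSum_one_right, hface,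
        segmentProjSum_zero_left]
    | succ m ih =>
      rw [segmentProjSum_quasiCubeCard_succ, ih]
      simp only [hface, segmentProjSum_zero_left, mul_zero, add_zero]
  | succ d ihd =>
    induction m with
    | zero =>
      rw [quasiCubeCard_zero_right, quasiCubeFace_zero_right, segmentProjSum_one_right,
        segmentProjSum_one_right, Nat.zero_div]
      ring
    | succ m ihm =>
      rw [segmentProjSum_quasiCubeCard_succ, ihm]
      by_cases h : d + 2 ∣ m + 1
      · rw [quasiCubeFace_succ_of_dvd h, Nat.succ_div_of_dvd h]
        ring
      · have hproj : segmentProjSum (d + 1) (quasiCubeFace (d + 1) m) =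
            quasiCubeFace d (m - m / (d + 2)) +
              (m / (d + 2) + 1) * segmentProjSum d (quasiCubeFace d (m - m / (d + 2))) := by
          have := ihd (m - m / (d + 2))
          rwa [sub_div_div_of_not_dvd h] at this
        have hnext : segmentProjSum (d + 1) (quasiCubeFace (d + 1) (m + 1)) =
            segmentProjSum (d + 1) (quasiCubeFace (d + 1) m) +
              segmentProjSum d (quasiCubeFace d (m - m / (d + 2))) := by
          rw [quasiCubeFace_succ_of_not_dvd h]
          exact segmentProjSum_quasiCubeCard_add le_rfl
        rw [hnext, quasiCubeFace_succ_of_not_dvd h, Nat.succ_div_of_not_dvd h, hproj]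
        ring

theorem mul_le_mul_segmentProjSum {d k n : ℕ} (hnk : n ≤ k ^ d) :
    d * n ≤ k * segmentProjSum d n := by
  induction d generalizing n with
  | zero => rw [zero_mul]; exact Nat.zero_le _
  | succ d ih =>
    rcases Nat.lt_or_ge n 2 with hlt | hge
    · have hk : n ≤ k := by
        rcases Nat.eq_zero_or_pos k with rfl | hk
        · simpa using hnk
        · omega
      interval_cases n
      · simp
      · rw [segmentProjSum_one_right, mul_comm]
        exact Nat.mul_le_mul_right _ hk
    obtain ⟨m, r, rfl, hr0, hr⟩ := exists_eq_quasiCubeCard_add d hge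
    have hk : m / (d + 1) + 2 ≤ k := div_add_two_le_of_quasiCubeCard_lt_pow (by omega)
    have hface : quasiCubeFace d m ≤ k ^ d :=
      (quasiCubeFace_le_pow d m).trans (Nat.pow_le_pow_left hk d)
    have hihr := ih (hr.trans hface)
    have hihf := ih hface
    rw [segmentProjSum_quasiCubeCard_add hr, segmentProjSum_quasiCubeCard, quasiCubeCard_succ]
    set a := m / (d + 1)
    set φ := quasiCubeFace d m
    calc (d + 1) * ((a + 1) * φ + r)
        = (a + 1) * φ + r + (a + 1) * (d * φ) + d * r := by ring
      _ ≤ k * φ + (a + 1) * (k * segmentProjSum d φ) + k * segmentProjSum d r := by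
        gcongr
        calc (a + 1) * φ + r ≤ (a + 1) * φ + φ := by omega
          _ = (a + 2) * φ := by ring
          _ ≤ k * φ := Nat.mul_le_mul_right φ hk
      _ = k * (φ + (a + 1) * segmentProjSum d φ + segmentProjSum d r) := by ring

lemma sum_Icc_pow_self_le (d : ℕ) : ∑ i ∈ Finset.Icc 1 d, i ^ i ≤ (d + 1) ^ d := by
  induction d with
  | zero => simp
  | succ d ih =>
    calc ∑ i ∈ Finset.Icc 1 (d + 1), i ^ i
        = ∑ i ∈ Finset.Icc 1 d, i ^ i + (d + 1) ^ (d + 1) :=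
          Finset.sum_Icc_succ_top (Nat.le_add_left 1 d) _
      _ ≤ (d + 1) ^ d + (d + 1) ^ (d + 1) := Nat.add_le_add_right ih _
      _ = (d + 2) * (d + 1) ^ d := by ring
      _ ≤ (d + 2) * (d + 2) ^ d := by gcongr; omega
      _ = (d + 2) ^ (d + 1) := by ring

lemma le_segmentProjSum_of_le_pow {d n : ℕ} (h : n ≤ (d + 1) ^ (d + 1)) :
    n ≤ segmentProjSum (d + 1) n :=
  Nat.le_of_mul_le_mul_left (mul_le_mul_segmentProjSum h) d.succ_pos

theorem le_segmentProjSum {d n : ℕ} (hn : n ≤ ∑ i ∈ Finset.Icc 1 d, i ^ i) :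
    n ≤ segmentProjSum d n := by
  induction d generalizing n with
  | zero => simpa [segmentProjSum_zero_left] using hn
  | succ d ih =>
    rcases le_total n ((d + 1) ^ (d + 1)) with h | h
    · exact le_segmentProjSum_of_le_pow h
    obtain ⟨r, rfl⟩ := Nat.exists_eq_add_of_le h
    have hr : r ≤ ∑ i ∈ Finset.Icc 1 d, i ^ i := by
      rw [Finset.sum_Icc_succ_top (Nat.le_add_left 1 d)] at hn
      omega
    have hface : r ≤ quasiCubeFace d ((d + 1) * d) := by
      rw [quasiCubeFace_mul, quasiCubeCard_mul]
      exact hr.trans (sum_Icc_pow_self_le d)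
    have hcube := le_segmentProjSum_of_le_pow (le_refl ((d + 1) ^ (d + 1)))
    rw [← quasiCubeCard_mul] at hcube ⊢
    rw [segmentProjSum_quasiCubeCard_add hface]
    exact Nat.add_le_add hcube (ih hr)

section Isoperimetry

variable {ι : Type*} {α : ι → Type*}

lemma card_le_prod_card_image_eval [∀ i, DecidableEq (α i)] {I : Finset ι}
    {S : Finset (∀ i, α i)} (hinj : Set.InjOn I.restrict (S : Set (∀ i, α i))) :
    S.card ≤ ∏ i ∈ I, (S.image fun x ↦ x i).card := by
  classical
  calc S.card ≤ (Fintype.piFinset fun i : I ↦ S.image fun x ↦ x i).card := by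
        refine Finset.card_le_card_of_injOn I.restrict (fun x hx ↦ ?_) hinj
        exact Fintype.mem_piFinset.mpr fun i ↦ Finset.mem_image_of_mem (fun x ↦ x i) hx
    _ = ∏ i ∈ I, (S.image fun x ↦ x i).card := by
        rw [Fintype.card_piFinset, Finset.prod_coe_sort I fun i ↦ (S.image fun x ↦ x i).card]

lemma exists_small_slice [∀ i, DecidableEq (α i)] {I : Finset ι} {S : Finset (∀ i, α i)}
    (hinj : Set.InjOn I.restrict (S : Set (∀ i, α i))) (hS : 2 ≤ S.card) :
    ∃ i ∈ I, ∃ v k, 2 ≤ k ∧ S.card ≤ k ^ I.card ∧ {x ∈ S | x i = v}.Nonempty ∧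
      k * {x ∈ S | x i = v}.card ≤ S.card := by
  have hprod := card_le_prod_card_image_eval hinj
  have hI : I.Nonempty := by
    by_contra! hI
    rw [hI, Finset.prod_empty] at hprod
    omega
  obtain ⟨i, hi, hmax⟩ := Finset.exists_max_image I (fun i ↦ (S.image fun x ↦ x i).card) hI
  have hpow := hprod.trans (Finset.prod_le_pow_card I _ _ hmax)
  have hk : 2 ≤ (S.image fun x ↦ x i).card := by
    by_contra! hlt
    have := hpow.trans (Nat.pow_le_pow_left (Nat.le_of_lt_succ hlt) I.card)
    rw [one_pow] at this
    omega
  obtain ⟨v, hv, hmin⟩ := Finset.exists_min_image (S.image fun x ↦ x i)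
    (fun v : α i ↦ {x ∈ S | x i = v}.card) (Finset.card_pos.mp (by omega))
  refine ⟨i, hi, v, _, hk, hpow, Finset.fiber_nonempty_iff_mem_image.mpr hv, ?_⟩
  rw [mul_comm]
  exact Finset.mul_card_image_le_card S _ hmin

lemma injOn_restrict_erase_slice [DecidableEq ι] [∀ i, DecidableEq (α i)] {I : Finset ι}
    {S : Finset (∀ i, α i)}
    (hinj : Set.InjOn I.restrict (S : Set (∀ i, α i))) (i : ι) (v : α i) :
    Set.InjOn (I.erase i).restrict (({x ∈ S | x i = v} : Finset (∀ i, α i)) : Set (∀ i, α i)) := by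
  intro x hx y hy hxy
  obtain ⟨hxS, hxv⟩ := Finset.mem_filter.mp hx
  obtain ⟨hyS, hyv⟩ := Finset.mem_filter.mp hy
  refine hinj hxS hyS (funext fun ⟨j, hj⟩ ↦ ?_)
  by_cases hji : j = i
  · subst hji
    exact hxv.trans hyv.symm
  · exact congrFun hxy ⟨j, Finset.mem_erase.mpr ⟨hji, hj⟩⟩

variable [Fintype ι] [DecidableEq ι] [∀ i, DecidableEq (α i)]

/-- The projection of a finite set of points along the `i`-th coordinate axis; the projected
points are indexed by the remaining coordinates. -/
def axisProj (i : ι) (S : Finset (∀ j, α j)) : Finset (∀ j : {j // j ≠ i}, α j) :=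
  S.image (Subtype.restrict (· ≠ i))

lemma card_axisProj_slice_add_le {i j : ι} (hij : i ≠ j) (S : Finset (∀ i, α i)) (v : α i) :
    (axisProj j {x ∈ S | ¬ x i = v}).card +
      (axisProj j {x ∈ S | x i = v}).card ≤ (axisProj j S).card := by
  rw [← Finset.card_union_of_disjoint]
  · rw [axisProj, axisProj, ← Finset.image_union]
    exact Finset.card_le_card (Finset.image_subset_image
      (Finset.union_subset (Finset.filter_subset _ S) (Finset.filter_subset _ S)))
  · simp only [axisProj, Finset.disjoint_left, Finset.mem_image, Finset.mem_filter]
    rintro _ ⟨x, ⟨-, hx⟩, rfl⟩ ⟨y, ⟨-, hy⟩, hxy⟩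
    exact hx (hy ▸ (congrFun hxy ⟨i, hij⟩).symm)

lemma sum_card_axisProj_slice_add_le {I : Finset ι} {i : ι} (hi : i ∈ I) (S : Finset (∀ i, α i))
    (v : α i) :
    ∑ j ∈ I, (axisProj j {x ∈ S | ¬ x i = v}).card +
      ∑ j ∈ I.erase i, (axisProj j {x ∈ S | x i = v}).card ≤
        ∑ j ∈ I, (axisProj j S).card := by
  rw [← Finset.add_sum_erase I _ hi, ← Finset.add_sum_erase I (fun j ↦ (axisProj j S).card) hi,
    add_assoc, ← Finset.sum_add_distrib]
  refine Nat.add_le_add (Finset.card_le_card ?_) (Finset.sum_le_sum fun j hj ↦ ?_)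
  · exact Finset.image_subset_image (Finset.filter_subset _ S)
  · exact card_axisProj_slice_add_le (Finset.ne_of_mem_erase hj).symm S v

theorem segmentProjSum_card_le_sum_card_axisProj (S : Finset (∀ i, α i)) (I : Finset ι)
    (hinj : Set.InjOn I.restrict (S : Set (∀ i, α i))) :
    segmentProjSum I.card S.card ≤ ∑ i ∈ I, (axisProj i S).card := by
  induction S using Finset.strongInduction generalizing I with
  | H S ih =>
  rcases Nat.lt_or_ge S.card 2 with hlt | hge
  · rcases S.eq_empty_or_nonempty with rfl | hne
    · exact Nat.zero_le _
    · rw [show S.card = 1 by have := hne.card_pos; omega, segmentProjSum_one_right,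
        Finset.card_eq_sum_ones]
      exact Finset.sum_le_sum fun i _ ↦ (hne.image _).card_pos
  obtain ⟨i, hi, v, k, hk, hpow, hne, hkt⟩ := exists_small_slice hinj hge
  set T := {x ∈ S | x i = v} with hT
  set R := {x ∈ S | ¬ x i = v}
  have hcard : T.card + R.card = S.card := Finset.card_filter_add_card_filter_not _
  have hRsub : R ⊂ S :=
    Finset.filter_ssubset.mpr (hne.imp fun x hx ↦ by simpa [hT] using hx)
  have hTsub : T ⊂ S := by
    refine (Finset.filter_subset _ S).ssubset_of_ne fun hTS ↦ ?_
    have htwo : 2 * S.card ≤ S.card := (Nat.mul_le_mul_right _ hk).trans (hTS ▸ hkt)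
    omega
  have hIcard : I.card = (I.erase i).card + 1 := (Finset.card_erase_add_one hi).symm
  rw [← hcard, add_comm] at hkt hpow ⊢
  rw [hIcard] at hpow
  calc segmentProjSum I.card (R.card + T.card)
      ≤ segmentProjSum I.card R.card + segmentProjSum (I.erase i).card T.card := by
        rw [hIcard]
        exact segmentProjSum_add_le hk hkt hpow
    _ ≤ ∑ j ∈ I, (axisProj j R).card + ∑ j ∈ I.erase i, (axisProj j T).card :=
        Nat.add_le_add (ih R hRsub I (hinj.mono hRsub.subset))
          (ih T hTsub (I.erase i) (injOn_restrict_erase_slice hinj i v))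
    _ ≤ ∑ j ∈ I, (axisProj j S).card := sum_card_axisProj_slice_add_le hi S v

theorem numerically_coverable_of_card_le_sum_general (S : Finset (∀ i, α i))
    (hS : S.card ≤ ∑ i ∈ Finset.Icc 1 (Fintype.card ι), i ^ i) :
    S.card ≤ ∑ i, (axisProj i S).card :=
  (le_segmentProjSum hS).trans <| segmentProjSum_card_le_sum_card_axisProj S Finset.univ
    fun _ _ _ _ hxy ↦ funext fun i ↦ congrFun hxy ⟨i, Finset.mem_univ i⟩

end Isoperimetry

lemma card_axisProj_le_card_coordProj {d : ℕ} (i : Fin d) (S : Finset (Fin d → ℕ)) :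
    (axisProj i S).card ≤ (coordProj i S).card := by
  have h : axisProj i S = axisProj i (coordProj i S) := by
    rw [axisProj, axisProj, coordProj, Finset.image_image]
    refine Finset.image_congr fun x _ ↦ funext fun j ↦ ?_
    exact (Function.update_of_ne j.2 0 x).symm
  rw [h]
  exact Finset.card_image_le

/-- Every finite set `S ⊆ ℕ^d` with `|S| ≤ ∑_{i=1}^d i^i` is numerically coverable. -/
theorem numerically_coverable_of_card_le_sum {d : ℕ}
    (S : Finset (Fin d → ℕ)) (hS : S.card ≤ ∑ i ∈ Finset.Icc 1 d, i ^ i) :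
    NumericallyCoverable S := by
  exact (numerically_coverable_of_card_le_sum_general S (by rwa [Fintype.card_fin])).trans
    (Finset.sum_le_sum fun i _ ↦ card_axisProj_le_card_coordProj i S)
end

section
/- The hat-guessing number of the complete bipartite graph K_{3,3} equals 3. -/
/-- A winning strategy for the hat-guessing game on `G` with `q` colors: each vertex `v`
guesses its color as a function of the colors of its neighbors, and for every coloring
some vertex guesses correctly. -/
def HatGuessingWins {V : Type*} (G : SimpleGraph V) (q : ℕ) : Prop :=
  ∃ f : ∀ v : V, (G.neighborSet v → Fin q) → Fin q,
    ∀ c : V → Fin q, ∃ v : V, f v (fun u => c u.1) = c v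

/-!
With three colors the subgraph `K_{2,2}` already has a winning strategy, made of four linear forms
over `ℤ/3`.

With four colors, write `x` and `y` for the colorings of the two sides, `F y` for the guesses on the
first side and `G x` for those on the second. Choose a color `c` with `F y 2 = c` for at most a
quarter of the `64` colorings `y`. A winning strategy then makes each of the remaining `48` or more
colorings `y` agree in some coordinate with every `G (r, s, c)` for which `r ≠ F y 0` and
`s ≠ F y 1`; such a `y` lies in all but at most one of the row sets `A r`, where `A r` consists of
the points that agree with all but at most one of `G (r, s, c)`, `s < 4`. It remains to show that at
most `47` points can do so.

Splitting along the coordinates one at a time gives `#(A r) ≤ 34` unless in each coordinate at least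
three of the four points `G (r, s, c)` coincide, in which case `A r` is, up to one extra point, the
set of points agreeing somewhere with the majority point `m r`. At most `44 + 3` points lie in all
but at most one of three rows of the latter kind. Otherwise two rows have at most `34` points and
the others at most `38`, which is tight for double counting `48` points in three rows each, and the
shape of the rows excludes equality.
-/

open Finset

section Monotonicity

variable {V W : Type*} {G : SimpleGraph V} {H : SimpleGraph W} {p q : ℕ}

lemma HatGuessingWins.anti (hG : HatGuessingWins G q) (hp : p ≠ 0) (hpq : p ≤ q) :
    HatGuessingWins G p := by
  have : NeZero p := ⟨hp⟩
  obtain ⟨f, hf⟩ := hG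
  let e : Fin p → Fin q := Fin.castLE hpq
  have he : Function.LeftInverse (Function.invFun e) e :=
    Function.leftInverse_invFun (Fin.castLE_injective hpq)
  refine ⟨fun v n ↦ Function.invFun e (f v (e ∘ n)), fun c ↦ ?_⟩
  obtain ⟨v, hv⟩ := hf (e ∘ c)
  exact ⟨v, (congrArg (Function.invFun e) hv).trans (he (c v))⟩

open Classical in
lemma HatGuessingWins.mono_isContained [NeZero q] (hG : HatGuessingWins G q)
    (hGH : G.IsContained H) : HatGuessingWins H q := by
  obtain ⟨f, hf⟩ := hG
  obtain ⟨φ⟩ := hGH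
  refine ⟨fun v n ↦ Function.extend φ
    (fun u ↦ f u fun w ↦ if h : H.Adj v (φ w) then n ⟨φ w, h⟩ else 0) 0 v, fun c ↦ ?_⟩
  obtain ⟨u, hu⟩ := hf (c ∘ φ)
  refine ⟨φ u, ?_⟩
  refine (φ.injective.extend_apply _ _ u).trans (Eq.trans (congrArg (f u) (funext fun w ↦ ?_)) hu)
  exact dif_pos (φ.toHom.map_adj w.2)

end Monotonicity

lemma hatGuessingWins_completeBipartiteGraph_iff {α β : Type*} {q : ℕ} :
    HatGuessingWins (completeBipartiteGraph α β) q ↔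
      ∃ (F : (β → Fin q) → α → Fin q) (G : (α → Fin q) → β → Fin q),
        ∀ x y, (∃ i, x i = F y i) ∨ ∃ j, y j = G x j := by
  constructor
  · rintro ⟨f, hf⟩
    have isRight_of_mem (i : α) (u : (completeBipartiteGraph α β).neighborSet (.inl i)) :
        u.1.isRight := by simpa using (SimpleGraph.mem_neighborSet ..).1 u.2
    have isLeft_of_mem (j : β) (u : (completeBipartiteGraph α β).neighborSet (.inr j)) :
        u.1.isLeft := by simpa using (SimpleGraph.mem_neighborSet ..).1 u.2
    refine ⟨fun y i ↦ f (.inl i) fun u ↦ y (u.1.getRight (isRight_of_mem i u)),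
      fun x j ↦ f (.inr j) fun u ↦ x (u.1.getLeft (isLeft_of_mem j u)), fun x y ↦ ?_⟩
    obtain ⟨i | j, hv⟩ := hf (Sum.elim x y)
    · refine .inl ⟨i, hv.symm.trans (congrArg _ (funext ?_))⟩
      rintro ⟨_ | _, hu⟩
      · simp at hu
      · rfl
    · refine .inr ⟨j, hv.symm.trans (congrArg _ (funext ?_))⟩
      rintro ⟨_ | _, hu⟩
      · rfl
      · simp at hu
  · rintro ⟨F, G, hFG⟩
    refine ⟨Sum.rec (fun i n ↦ F (fun j ↦ n ⟨.inr j, by simp⟩) i)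
      (fun j n ↦ G (fun i ↦ n ⟨.inl i, by simp⟩) j), fun c ↦ ?_⟩
    obtain ⟨i, hi⟩ | ⟨j, hj⟩ := hFG (c ∘ .inl) (c ∘ .inr)
    · exact ⟨.inl i, hi.symm⟩
    · exact ⟨.inr j, hj.symm⟩

lemma hatGuessingWins_completeBipartiteGraph_two_two :
    HatGuessingWins (completeBipartiteGraph (Fin 2) (Fin 2)) 3 := by
  have hcover : ∀ x₀ x₁ y₀ y₁ : Fin 3,
      x₀ = -(y₀ + y₁) ∨ x₁ = y₁ - y₀ ∨ y₀ = x₀ + x₁ ∨ y₁ = x₀ - x₁ := by decide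
  refine hatGuessingWins_completeBipartiteGraph_iff.2
    ⟨fun y ↦ ![-(y 0 + y 1), y 1 - y 0], fun x ↦ ![x 0 + x 1, x 0 - x 1], fun x y ↦ ?_⟩
  simpa [Fin.exists_fin_two, or_assoc] using hcover (x 0) (x 1) (y 0) (y 1)

lemma completeBipartiteGraph_isContained_of_embedding {α α' β β' : Type*}
    (e : α ↪ α') (e' : β ↪ β') :
    (completeBipartiteGraph α β).IsContained (completeBipartiteGraph α' β') :=
  ⟨⟨⟨e.sumMap e', by simp [completeBipartiteGraph_adj]⟩, (e.sumMap e').injective⟩⟩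

namespace HatGuessing
section AlmostInter

variable {ι β : Type*} [Fintype β] [DecidableEq β] {S T : Finset ι} {A B : ι → Finset β} {y : β}

/-- The almost-intersection of a family of finite sets: the points lying in all but at most one of
the sets `A s`, `s ∈ S`. -/
def almostInter (S : Finset ι) (A : ι → Finset β) : Finset β :=
  {y | #{s ∈ S | y ∉ A s} ≤ 1}

lemma mem_almostInter : y ∈ almostInter S A ↔ #{s ∈ S | y ∉ A s} ≤ 1 := by
  simp [almostInter]

lemma mem_almostInter_of_forall_ne (s₀ : ι) (h : ∀ s ∈ S, s ≠ s₀ → y ∈ A s) :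
    y ∈ almostInter S A := by
  refine mem_almostInter.2 ((card_le_card (t := {s₀}) fun s hs ↦ ?_).trans_eq (card_singleton s₀))
  grind

lemma mem_or_mem_of_mem_almostInter (hy : y ∈ almostInter S A) {s t : ι} (hs : s ∈ S)
    (ht : t ∈ S) (hst : s ≠ t) : y ∈ A s ∨ y ∈ A t := by
  by_contra! h
  exact hst (card_le_one.1 (mem_almostInter.1 hy) s (by simp [hs, h.1]) t (by simp [ht, h.2]))

lemma almostInter_anti (A : ι → Finset β) (h : S ⊆ T) : almostInter T A ⊆ almostInter S A :=
  fun _ hy ↦ mem_almostInter.2 <|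
    (card_le_card (filter_subset_filter _ h)).trans (mem_almostInter.1 hy)

lemma card_almostInter_le_add_sum_sdiff (S : Finset ι) (A B : ι → Finset β) :
    #(almostInter S A) ≤ #(almostInter S B) + ∑ s ∈ S, #(A s \ B s) := by
  have hsub : almostInter S A ⊆ almostInter S B ∪ S.biUnion fun s ↦ A s \ B s := by
    intro y hy
    rw [mem_union, or_iff_not_imp_right]
    intro hAB
    refine mem_almostInter.2 ((card_le_card fun s hs ↦ ?_).trans (mem_almostInter.1 hy))
    simp only [mem_biUnion, mem_sdiff, mem_filter, not_exists, not_and, not_not] at hAB hs ⊢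
    exact ⟨hs.1, fun hA ↦ hs.2 (hAB s hs.1 hA)⟩
  calc #(almostInter S A) ≤ _ := card_le_card hsub
    _ ≤ _ := card_union_le _ _
    _ ≤ _ := by gcongr; exact card_biUnion_le

lemma sum_card_eq_sum_card_filter_mem (S : Finset ι) (A : ι → Finset β) :
    ∑ s ∈ S, #(A s) = ∑ y, #{s ∈ S | y ∈ A s} := by
  simpa [bipartiteAbove, bipartiteBelow] using
    sum_card_bipartiteAbove_eq_sum_card_bipartiteBelow (s := S) (t := univ) fun s y ↦ y ∈ A s

lemma ite_mem_almostInter_le_card (S : Finset ι) (A : ι → Finset β) (y : β) :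
    (if y ∈ almostInter S A then #S - 1 else 0) ≤ #{s ∈ S | y ∈ A s} := by
  have := card_filter_add_card_filter_not (s := S) fun s ↦ y ∈ A s
  have := mem_almostInter (S := S) (A := A) (y := y)
  split_ifs <;> grind

lemma sum_ite_mem_almostInter (S : Finset ι) (A : ι → Finset β) :
    ∑ y, (if y ∈ almostInter S A then #S - 1 else 0) = #(almostInter S A) * (#S - 1) := by
  simp

lemma card_almostInter_mul_le_sum_card (S : Finset ι) (A : ι → Finset β) :
    #(almostInter S A) * (#S - 1) ≤ ∑ s ∈ S, #(A s) := by
  rw [sum_card_eq_sum_card_filter_mem, ← sum_ite_mem_almostInter]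
  exact sum_le_sum fun y _ ↦ ite_mem_almostInter_le_card S A y

lemma card_filter_mem_eq_ite_of_sum_card_le
    (h : ∑ s ∈ S, #(A s) ≤ #(almostInter S A) * (#S - 1)) (y : β) :
    #{s ∈ S | y ∈ A s} = if y ∈ almostInter S A then #S - 1 else 0 := by
  rw [sum_card_eq_sum_card_filter_mem, ← sum_ite_mem_almostInter] at h
  have hle := fun y (_ : y ∈ univ) ↦ ite_mem_almostInter_le_card S A y
  exact ((sum_eq_sum_iff_of_le hle).1 ((sum_le_sum hle).antisymm h) y (mem_univ y)).symm

lemma mem_almostInter_of_mem_of_sum_card_le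
    (h : ∑ s ∈ S, #(A s) ≤ #(almostInter S A) * (#S - 1)) {s : ι} (hs : s ∈ S) (hy : y ∈ A s) :
    y ∈ almostInter S A := by
  by_contra hyS
  have hcount := card_filter_mem_eq_ite_of_sum_card_le h y
  rw [if_neg hyS, card_eq_zero, filter_eq_empty_iff] at hcount
  exact hcount hs hy

lemma exists_notMem_of_sum_card_le (h : ∑ s ∈ S, #(A s) ≤ #(almostInter S A) * (#S - 1))
    (hS : S.Nonempty) (y : β) : ∃ s ∈ S, y ∉ A s := by
  by_contra! hyS
  have hcount := card_filter_mem_eq_ite_of_sum_card_le h y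
  rw [filter_true_of_mem hyS] at hcount
  have := hS.card_pos
  split_ifs at hcount <;> lia

end AlmostInter

section MissSet
variable {ι α : Type*} [DecidableEq α] {S : Finset ι} {f : ι → α} {v : α}

/-- The set of indices in `S` at which `f` misses the value `v`; these indices remain to be hit
once the coordinate described by `f` is fixed to `v`. -/
def missSet (S : Finset ι) (f : ι → α) (v : α) : Finset ι := {s ∈ S | f s ≠ v}

/-- `f` takes one and the same value at all but at most one index in `S`. -/
def AlmostConst (S : Finset ι) (f : ι → α) : Prop := ∃ v, #(missSet S f v) ≤ 1

lemma card_missSet_le (S : Finset ι) (f : ι → α) (v : α) : #(missSet S f v) ≤ #S :=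
  card_filter_le _ _

lemma missSet_eq_self_of_card_le (h : #S ≤ #(missSet S f v)) : missSet S f v = S :=
  eq_of_subset_of_card_le (filter_subset _ _) h

lemma not_almostConst : ¬AlmostConst S f ↔ ∀ v, 1 < #(missSet S f v) := by
  simp [AlmostConst]

end MissSet

section AgreeSet
variable {ι κ α : Type*} [Fintype κ] [DecidableEq κ] [Fintype α] [DecidableEq α]

/-- The set of points agreeing with `m` in at least one coordinate; for a vertex side guessing `m`,
these are the colorings in which some guess on that side is correct. -/
def agreeSet (m : κ → α) : Finset (κ → α) := {y | ∃ j, y j = m j}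

lemma mem_agreeSet {m y : κ → α} : y ∈ agreeSet m ↔ ∃ j, y j = m j := by simp [agreeSet]

lemma card_agreeSet_add (m : κ → α) :
    #(agreeSet m) + (Fintype.card α - 1) ^ Fintype.card κ =
      Fintype.card α ^ Fintype.card κ := by
  have hcompl : (agreeSet m)ᶜ = Fintype.piFinset fun j ↦ {m j}ᶜ := by
    ext y; simp [mem_agreeSet]
  have hcard := card_add_card_compl (agreeSet m)
  simpa [hcompl, card_compl] using hcard

/-- The set of points agreeing somewhere with all but at most one of the points `g s`, `s ∈ S`. -/
def almostAgree (S : Finset ι) (g : ι → κ → α) : Finset (κ → α) :=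
  almostInter S fun s ↦ agreeSet (g s)

lemma mem_almostAgree {S : Finset ι} {g : ι → κ → α} {y : κ → α} :
    y ∈ almostAgree S g ↔ #{s ∈ S | ∀ j, y j ≠ g s j} ≤ 1 := by
  simp [almostAgree, mem_almostInter, mem_agreeSet]

lemma card_almostAgree_of_isEmpty [IsEmpty κ] (S : Finset ι) (g : ι → κ → α) :
    #(almostAgree S g) = if #S ≤ 1 then 1 else 0 := by
  have : almostAgree S g = if #S ≤ 1 then univ else ∅ := by
    ext y
    simp only [mem_almostAgree, IsEmpty.forall_iff, filter_true]
    split_ifs with hS <;> simp only [hS, mem_univ, notMem_empty]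
  split_ifs at this ⊢ <;> simp [this]

lemma sum_card_missSet (S : Finset ι) (f : ι → α) :
    ∑ v, #(missSet S f v) = #S * (Fintype.card α - 1) := by
  have hfiber (s : ι) : #{v | f s ≠ v} = Fintype.card α - 1 := by
    rw [filter_ne, card_erase_of_mem (mem_univ _), card_univ]
  simpa [bipartiteAbove, bipartiteBelow, hfiber, missSet] using
    (sum_card_bipartiteAbove_eq_sum_card_bipartiteBelow (s := S) (t := univ) fun s v ↦ f s ≠ v).symm

lemma card_almostAgree_succ {k : ℕ} (S : Finset ι) (g : ι → Fin (k + 1) → α) (p : Fin (k + 1)) :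
    #(almostAgree S g) =
      ∑ a, #(almostAgree (missSet S (g · p) a) fun s i ↦ g s (p.succAbove i)) := by
  have hmem (a : α) (y : Fin k → α) : p.insertNth a y ∈ almostAgree S g ↔
      y ∈ almostAgree (missSet S (g · p) a) fun s i ↦ g s (p.succAbove i) := by
    simp [mem_almostAgree, missSet, Fin.forall_iff_succAbove p, filter_filter, ne_comm (a := a)]
  calc #(almostAgree S g) = ∑ y, if y ∈ almostAgree S g then 1 else 0 := by simp
    _ = ∑ z : α × (Fin k → α), if p.insertNth z.1 z.2 ∈ almostAgree S g then 1 else 0 :=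
      ((Fin.insertNthEquiv (fun _ ↦ α) p).sum_comp _).symm
    _ = _ := by simp only [Fintype.sum_prod_type, hmem, sum_ite_mem, univ_inter, card_eq_sum_ones]

lemma mem_almostAgree_of_card_missSet_le {S : Finset ι} {g : ι → κ → α} {y : κ → α} {j : κ}
    (h : #(missSet S (g · j) (y j)) ≤ 1) : y ∈ almostAgree S g := by
  refine mem_almostAgree.2 ((card_le_card fun s hs ↦ ?_).trans h)
  rw [mem_filter] at hs
  exact mem_filter.2 ⟨hs.1, (hs.2 j).symm⟩

lemma agreeSet_subset_almostAgree {S : Finset ι} {g : ι → κ → α} {m : κ → α}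
    (hm : ∀ j, #(missSet S (g · j) (m j)) ≤ 1) : agreeSet m ⊆ almostAgree S g := by
  intro y hy
  obtain ⟨j, hj⟩ := mem_agreeSet.1 hy
  exact mem_almostAgree_of_card_missSet_le (j := j) (hj ▸ hm j)

-- Otherwise every index hit by `y` is an exceptional index of another coordinate, so fewer than
-- `#S - 1` of them are hit.
lemma exists_mem_missSet_eq {S : Finset ι} {g : ι → κ → α} {m y : κ → α}
    (hcard : Fintype.card κ < #S) (hm : ∀ j, #(missSet S (g · j) (m j)) ≤ 1)
    (hy : y ∈ almostAgree S g) (hym : y ∉ agreeSet m) (j : κ) :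
    ∃ s ∈ missSet S (g · j) (m j), g s j = y j := by
  classical
  by_contra! hj
  rw [mem_agreeSet, not_exists] at hym
  have hmiss := mem_almostAgree.1 hy
  have hhit : #{s ∈ S | ¬∀ j, y j ≠ g s j} ≤ Fintype.card κ - 1 := by
    have hsub : {s ∈ S | ¬∀ j, y j ≠ g s j} ⊆
        (univ.erase j).biUnion fun i ↦ missSet S (g · i) (m i) := by
      intro s hs
      simp only [mem_filter, not_forall, not_not] at hs
      obtain ⟨hsS, i, hi⟩ := hs
      have hsi : s ∈ missSet S (g · i) (m i) := mem_filter.2 ⟨hsS, fun h ↦ hym i (hi.trans h)⟩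
      refine mem_biUnion.2 ⟨i, mem_erase.2 ⟨?_, mem_univ i⟩, hsi⟩
      rintro rfl
      exact hj s hsi hi.symm
    simpa using (card_le_card hsub).trans (card_biUnion_le_card_mul _ _ 1 fun i _ ↦ hm i)
  have := card_filter_add_card_filter_not (s := S) fun s ↦ ∀ j, y j ≠ g s j
  have : 0 < Fintype.card κ := Fintype.card_pos_iff.2 ⟨j⟩
  lia

lemma card_almostAgree_sdiff_agreeSet_le {S : Finset ι} {g : ι → κ → α} {m : κ → α}
    (hcard : Fintype.card κ < #S) (hm : ∀ j, #(missSet S (g · j) (m j)) ≤ 1) :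
    #(almostAgree S g \ agreeSet m) ≤ 1 := by
  refine card_le_one.2 fun y hy z hz ↦ funext fun j ↦ ?_
  rw [mem_sdiff] at hy hz
  obtain ⟨s, hs, hsy⟩ := exists_mem_missSet_eq hcard hm hy.1 hy.2 j
  obtain ⟨t, ht, htz⟩ := exists_mem_missSet_eq hcard hm hz.1 hz.2 j
  rw [← hsy, ← htz, card_le_one.1 (hm j) s hs t ht]

end AgreeSet

section FourColors
variable {ι : Type*} {S : Finset ι}

lemma sum_card_missSet_four (S : Finset ι) (f : ι → Fin 4) :
    #(missSet S f 0) + #(missSet S f 1) + #(missSet S f 2) + #(missSet S f 3) = 3 * #S := by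
  rw [← Fin.sum_univ_four fun v ↦ #(missSet S f v), sum_card_missSet, Fintype.card_fin, mul_comm]

lemma card_almostAgree_one_le {g : ι → Fin 1 → Fin 4} (hS : #S ≤ 4)
    (hg : #S = 4 → ¬AlmostConst S (g · 0)) :
    #(almostAgree S g) ≤ if #S ≤ 1 then 4 else 4 - #S := by
  have hle := card_missSet_le S (g · 0)
  have hsum := sum_card_missSet_four S (g · 0)
  simp only [card_almostAgree_succ S g 0, card_almostAgree_of_isEmpty, Fin.sum_univ_four]
  simp only [not_almostConst, Fin.forall_iff_castSucc, Fin.forall_fin_zero] at hle hg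
  grind

-- The one-coordinate bound `4 - #(missSet S f a)` is linear, so it can be summed over the slices.
lemma card_almostAgree_two_add_le {g : ι → Fin 2 → Fin 4} (hS : #S ≤ 4)
    (hg : #S = 4 → ∀ j, ¬AlmostConst S (g · j)) :
    #(almostAgree S g) + 4 * #S ≤ 20 := by
  have hle := card_missSet_le S (g · 0)
  have hsum := sum_card_missSet_four S (g · 0)
  have hslice (a : Fin 4) := card_almostAgree_one_le
    (g := fun s i ↦ g s (Fin.succAbove 0 i)) ((hle a).trans hS) fun h ↦ by
      have hm := missSet_eq_self_of_card_le (hS.trans h.ge)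
      rw [hm] at h ⊢
      exact hg h _
  have hg₀ := fun h ↦ not_almostConst.1 (hg h 0)
  rw [card_almostAgree_succ S g 0, Fin.sum_univ_four]
  simp only [Fin.forall_iff_castSucc, Fin.forall_fin_zero] at hle hslice hg₀
  grind

lemma card_almostAgree_two_le_five {g : ι → Fin 2 → Fin 4} {j : Fin 2} (hS : #S = 4)
    (hj : ¬AlmostConst S (g · j)) : #(almostAgree S g) ≤ 5 := by
  obtain ⟨p, rfl⟩ := (by decide : ∀ j : Fin 2, ∃ p : Fin 2, p.succAbove 0 = j) j
  have hle := card_missSet_le S (g · p)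
  have hsum := sum_card_missSet_four S (g · p)
  have hslice (a : Fin 4) := card_almostAgree_one_le
    (g := fun s i ↦ g s (p.succAbove i)) ((hle a).trans hS.le) fun h ↦ by
      rwa [missSet_eq_self_of_card_le (hS.trans h.symm).le]
  rw [card_almostAgree_succ S g p, Fin.sum_univ_four]
  simp only [Fin.forall_iff_castSucc, Fin.forall_fin_zero] at hle hslice
  grind

lemma card_almostAgree_three_add_le {g : ι → Fin 3 → Fin 4} (p : Fin 3) (hS : #S ≤ 4)
    (hg : #S = 4 → ∀ j ≠ p, ¬AlmostConst S (g · j)) :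
    #(almostAgree S g) + 12 * #S ≤ 80 := by
  have hle := card_missSet_le S (g · p)
  have hsum := sum_card_missSet_four S (g · p)
  have hslice (a : Fin 4) := card_almostAgree_two_add_le
    (g := fun s i ↦ g s (p.succAbove i)) ((hle a).trans hS) fun h j ↦ by
      have hm := missSet_eq_self_of_card_le (hS.trans h.ge)
      rw [hm] at h ⊢
      exact hg h _ (p.succAbove_ne j)
  rw [card_almostAgree_succ S g p, Fin.sum_univ_four]
  linarith [hslice 0, hslice 1, hslice 2, hslice 3]

lemma card_almostAgree_three_le_thirty_four {g : ι → Fin 3 → Fin 4} {j : Fin 3} (hS : #S = 4)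
    (hj : ¬AlmostConst S (g · j)) : #(almostAgree S g) ≤ 34 := by
  obtain ⟨p, hp⟩ := exists_ne j
  obtain ⟨i, rfl⟩ := Fin.exists_succAbove_eq hp.symm
  have hle := card_missSet_le S (g · p)
  have hsum := sum_card_missSet_four S (g · p)
  let slice (a : Fin 4) := almostAgree (missSet S (g · p) a) fun s i ↦ g s (p.succAbove i)
  have hfull (a : Fin 4) (ha : #(missSet S (g · p) a) = 4) : #(slice a) ≤ 5 :=
    card_almostAgree_two_le_five ha <| by
      rwa [missSet_eq_self_of_card_le (hS.trans ha.symm).le]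
  have hslice (a : Fin 4) (ha : #(missSet S (g · p) a) ≠ 4) :
      #(slice a) + 4 * #(missSet S (g · p) a) ≤ 20 :=
    card_almostAgree_two_add_le ((hle a).trans hS.le) fun h ↦ (ha h).elim
  have htriv (a : Fin 4) : #(slice a) ≤ 16 := (card_le_univ _).trans_eq (by simp)
  have hsucc : #(almostAgree S g) = #(slice 0) + #(slice 1) + #(slice 2) + #(slice 3) := by
    rw [card_almostAgree_succ S g p, Fin.sum_univ_four]
  rw [hS] at hle hsum
  simp only [Fin.forall_iff_castSucc, Fin.forall_fin_zero] at hle hslice hfull htriv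
  grind

lemma exists_agreeSet_of_lt_card {g : ι → Fin 3 → Fin 4} (hS : #S = 4)
    (h : 34 < #(almostAgree S g)) :
    ∃ m, agreeSet m ⊆ almostAgree S g ∧ #(almostAgree S g \ agreeSet m) ≤ 1 := by
  have hconst (j : Fin 3) : AlmostConst S (g · j) := by
    by_contra hj
    exact h.not_ge (card_almostAgree_three_le_thirty_four hS hj)
  choose m hm using hconst
  exact ⟨m, agreeSet_subset_almostAgree hm, card_almostAgree_sdiff_agreeSet_le (by simp [hS]) hm⟩

lemma card_almostAgree_three_le_thirty_eight {g : ι → Fin 3 → Fin 4} (hS : #S = 4) :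
    #(almostAgree S g) ≤ 38 := by
  by_contra! h
  obtain ⟨m, -, hm⟩ := exists_agreeSet_of_lt_card hS (by lia : 34 < #(almostAgree S g))
  have hcard := card_agreeSet_add m
  have := card_le_card_sdiff_add_card (s := almostAgree S g) (t := agreeSet m)
  norm_num at hcard
  lia

lemma exists_forall_ne_almostConst {g : ι → Fin 3 → Fin 4} (hS : #S = 4)
    (h : 32 < #(almostAgree S g)) : ∃ k, ∀ j ≠ k, AlmostConst S (g · j) := by
  by_contra! hconst
  obtain ⟨i, -, hi⟩ := hconst 0
  obtain ⟨j, hji, hj⟩ := hconst i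
  obtain ⟨p, hp⟩ := (by decide : ∀ i j : Fin 3, j ≠ i → ∃ p, ∀ k ≠ p, k = i ∨ k = j) i j hji
  have := card_almostAgree_three_add_le p hS.le fun _ k hk ↦ by
    obtain rfl | rfl := hp k hk
    exacts [hi, hj]
  lia

lemma exists_almostConst_hyperplanes {g : ι → Fin 3 → Fin 4} (hS : #S = 4)
    (h : 32 < #(almostAgree S g)) :
    ∃ k, ∀ j ≠ k, ∃ v, ∀ y : Fin 3 → Fin 4, y j = v → y ∈ almostAgree S g := by
  obtain ⟨k, hk⟩ := exists_forall_ne_almostConst hS h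
  refine ⟨k, fun j hj ↦ ?_⟩
  obtain ⟨v, hv⟩ := hk j hj
  exact ⟨v, fun y hy ↦ mem_almostAgree_of_card_missSet_le (j := j) (hy ▸ hv)⟩

lemma card_almostInter_le_of_agreeSet {A : ι → Finset (Fin 3 → Fin 4)} (hS : #S = 3)
    (hA : ∀ s ∈ S, ∃ m, #(A s \ agreeSet m) ≤ 1) : #(almostInter S A) ≤ 47 := by
  choose! m hm using hA
  have hagree := card_almostAgree_three_add_le (S := S) (g := m) 0 (by lia) (by lia)
  have hsdiff := sum_le_card_nsmul _ _ _ hm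
  have := card_almostInter_le_add_sum_sdiff S A fun s ↦ agreeSet (m s)
  rw [← almostAgree] at this
  rw [hS, smul_eq_mul] at hsdiff
  lia

-- Otherwise the hyperplane contains at least `1 * 2 * 2` points agreeing with neither `p` nor `q`.
lemma eq_or_eq_of_hyperplane_subset {B C : Finset (Fin 3 → Fin 4)} {p q : Fin 3 → Fin 4}
    {j : Fin 3} {v : Fin 4} (hB : #(B \ agreeSet p) ≤ 1) (hC : #(C \ agreeSet q) ≤ 1)
    (h : ∀ y, y j = v → y ∈ B ∨ y ∈ C) : v = p j ∨ v = q j := by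
  by_contra! hv
  let box (i : Fin 3) : Finset (Fin 4) := if i = j then {v} else {p i, q i}ᶜ
  have hbox_ne (i : Fin 3) (a : Fin 4) (ha : a ∈ box i) : a ≠ p i ∧ a ≠ q i := by
    by_cases hi : i = j <;> simp_all [box]
  have hbox_card (i : Fin 3) : (if i = j then 1 else 2) ≤ #(box i) := by
    have := card_le_two (a := p i) (b := q i)
    have := card_compl ({p i, q i} : Finset (Fin 4))
    rw [Fintype.card_fin] at this
    by_cases hi : i = j
    · simp [box, hi]
    · simp only [box, hi, if_false]
      lia
  have hfour : ∏ i, (if i = j then 1 else 2) = 4 :=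
    (by decide : ∀ j : Fin 3, ∏ i, (if i = j then 1 else 2) = 4) j
  have hsub : Fintype.piFinset box ⊆ (B \ agreeSet p) ∪ (C \ agreeSet q) := by
    intro y hy
    rw [Fintype.mem_piFinset] at hy
    have hp : y ∉ agreeSet p := by simpa [mem_agreeSet] using fun i ↦ (hbox_ne i _ (hy i)).1
    have hq : y ∉ agreeSet q := by simpa [mem_agreeSet] using fun i ↦ (hbox_ne i _ (hy i)).2
    have hyj : y j = v := by simpa [box] using hy j
    simpa [hp, hq] using h y hyj
  have : 4 ≤ 2 := calc
    4 ≤ ∏ i, #(box i) := hfour.ge.trans (prod_le_prod' fun i _ ↦ hbox_card i)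
    _ = #(Fintype.piFinset box) := (Fintype.card_piFinset box).symm
    _ ≤ #(B \ agreeSet p) + #(C \ agreeSet q) := (card_le_card hsub).trans (card_union_le _ _)
    _ ≤ 2 := by lia
  lia

lemma exists_mem_inter_of_hyperplanes {B C D E : Finset (Fin 3 → Fin 4)}
    (hB : ∃ m, agreeSet m ⊆ B ∧ #(B \ agreeSet m) ≤ 1)
    (hC : ∃ m, agreeSet m ⊆ C ∧ #(C \ agreeSet m) ≤ 1)
    (hD : ∃ k, ∀ j ≠ k, ∃ v, ∀ y : Fin 3 → Fin 4, y j = v → y ∈ D)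
    (hE : ∃ k, ∀ j ≠ k, ∃ v, ∀ y : Fin 3 → Fin 4, y j = v → y ∈ E)
    (hDBC : ∀ y ∈ D, y ∈ B ∨ y ∈ C) : ∃ y, y ∈ B ∧ y ∈ C ∧ y ∈ D ∧ y ∈ E := by
  obtain ⟨p, hpB, hB⟩ := hB
  obtain ⟨q, hqC, hC⟩ := hC
  obtain ⟨d, hD⟩ := hD
  obtain ⟨e, hE⟩ := hE
  obtain ⟨i, j, k, hi, hj, hij, hki, hkj⟩ :=
    (by decide : ∀ d e : Fin 3, ∃ i j k : Fin 3, i ≠ d ∧ j ≠ e ∧ i ≠ j ∧ k ≠ i ∧ k ≠ j) d e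
  obtain ⟨a, ha⟩ := hD i hi
  obtain ⟨b, hb⟩ := hE j hj
  let point (m : Fin 3 → Fin 4) := Function.update (Function.update m i a) j b
  have hpoint_i (m) : point m i = a := by simp [point, hij]
  have hpoint_j (m) : point m j = b := by simp [point]
  have hpoint_k (m) : point m k = m k := by simp [point, hki, hkj]
  obtain hap | haq := eq_or_eq_of_hyperplane_subset hB hC fun y hy ↦ hDBC y (ha y hy)
  · exact ⟨point q, hpB (mem_agreeSet.2 ⟨i, (hpoint_i q).trans hap⟩),
      hqC (mem_agreeSet.2 ⟨k, hpoint_k q⟩), ha _ (hpoint_i q), hb _ (hpoint_j q)⟩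
  · exact ⟨point p, hpB (mem_agreeSet.2 ⟨k, hpoint_k p⟩),
      hqC (mem_agreeSet.2 ⟨i, (hpoint_i p).trans haq⟩), ha _ (hpoint_i p), hb _ (hpoint_j p)⟩

lemma exists_ne_card_almostAgree_le {G : Fin 4 → Fin 4 → Fin 3 → Fin 4}
    (h : 47 < #(almostInter univ fun r ↦ almostAgree univ (G r))) (r₀ : Fin 4) :
    ∃ r ≠ r₀, #(almostAgree univ (G r)) ≤ 34 := by
  by_contra! hlarge
  have hrow : ∀ r ∈ univ.erase r₀, ∃ m, #(almostAgree univ (G r) \ agreeSet m) ≤ 1 := by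
    intro r hr
    obtain ⟨m, -, hm⟩ := exists_agreeSet_of_lt_card (card_fin 4) (hlarge r (ne_of_mem_erase hr))
    exact ⟨m, hm⟩
  have hthree := card_almostInter_le_of_agreeSet (by simp) hrow
  have := card_le_card (almostInter_anti (fun r ↦ almostAgree univ (G r)) (erase_subset r₀ univ))
  lia

lemma exists_complementary_pair {r s : Fin 4} (h : s ≠ r) :
    ∃ t u, t ≠ u ∧ (∀ x, x = r ∨ x = s ∨ x = t ∨ x = u) ∧
      ∀ f : Fin 4 → ℕ, ∑ x, f x = f r + f s + f t + f u := by
  obtain ⟨t, u, hnodup, huniv⟩ : ∃ t u, [r, s, t, u].Nodup ∧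
      ∀ x, x = r ∨ x = s ∨ x = t ∨ x = u := by decide +revert
  refine ⟨t, u, by simp_all, huniv, fun f ↦ ?_⟩
  have : (univ : Finset (Fin 4)) = [r, s, t, u].toFinset := by ext x; simpa using huniv x
  rw [this, List.sum_toFinset f hnodup]
  simp [add_assoc]

lemma card_almostInter_almostAgree_le (G : Fin 4 → Fin 4 → Fin 3 → Fin 4) :
    #(almostInter univ fun r ↦ almostAgree univ (G r)) ≤ 47 := by
  by_contra! h
  obtain ⟨r, -, hr⟩ := exists_ne_card_almostAgree_le h 0
  obtain ⟨s, hsr, hs⟩ := exists_ne_card_almostAgree_le h r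
  obtain ⟨t, u, htu, huniv, hsum⟩ := exists_complementary_pair hsr
  have h4 : #(univ : Finset (Fin 4)) = 4 := card_fin 4
  have ht := card_almostAgree_three_le_thirty_eight (g := G t) h4
  have hu := card_almostAgree_three_le_thirty_eight (g := G u) h4
  have hmul := card_almostInter_mul_le_sum_card univ fun r ↦ almostAgree univ (G r)
  rw [hsum, h4] at hmul
  have htight : ∑ r, #(almostAgree univ (G r)) ≤
      #(almostInter univ fun r ↦ almostAgree univ (G r)) * (#(univ : Finset (Fin 4)) - 1) := by
    rw [hsum, h4]
    lia
  obtain ⟨y, hyt, hyu, hyr, hys⟩ := exists_mem_inter_of_hyperplanes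
    (exists_agreeSet_of_lt_card (g := G t) h4 (by lia))
    (exists_agreeSet_of_lt_card (g := G u) h4 (by lia))
    (exists_almostConst_hyperplanes (g := G r) h4 (by lia))
    (exists_almostConst_hyperplanes (g := G s) h4 (by lia))
    fun y hy ↦ mem_or_mem_of_mem_almostInter
      (mem_almostInter_of_mem_of_sum_card_le htight (mem_univ r) hy) (mem_univ t) (mem_univ u) htu
  obtain ⟨x, -, hx⟩ := exists_notMem_of_sum_card_le htight univ_nonempty y
  obtain rfl | rfl | rfl | rfl := huniv x
  exacts [hx hyr, hx hys, hx hyt, hx hyu]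

end FourColors
end HatGuessing

open HatGuessing in
lemma not_hatGuessingWins_completeBipartiteGraph_three_three :
    ¬HatGuessingWins (completeBipartiteGraph (Fin 3) (Fin 3)) 4 := by
  rw [hatGuessingWins_completeBipartiteGraph_iff]
  rintro ⟨F, G, hFG⟩
  obtain ⟨c, hc⟩ := Fintype.exists_card_fiber_le_of_card_le_mul (fun y ↦ F y 2) (n := 16) (by simp)
  have hsub : ({y | F y 2 = c} : Finset (Fin 3 → Fin 4))ᶜ ⊆
      almostInter univ fun r ↦ almostAgree univ fun s ↦ G ![r, s, c] := by
    intro y hy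
    refine mem_almostInter_of_forall_ne (F y 0) fun r _ hr ↦
      mem_almostInter_of_forall_ne (F y 1) fun s _ hs ↦ mem_agreeSet.2 ?_
    refine (hFG ![r, s, c] y).resolve_left ?_
    simpa [Fin.forall_fin_succ, hr, hs, eq_comm] using hy
  have hcard := card_add_card_compl ({y | F y 2 = c} : Finset (Fin 3 → Fin 4))
  have := (card_le_card hsub).trans (card_almostInter_almostAgree_le _)
  rw [show Fintype.card (Fin 3 → Fin 4) = 64 by simp] at hcard
  lia

/-- The hat-guessing number of the complete bipartite graph `K_{3,3}` equals `3`. -/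
theorem hat_guessing_K33 :
    IsGreatest {q : ℕ | HatGuessingWins (completeBipartiteGraph (Fin 3) (Fin 3)) q} 3 := by
  constructor
  · exact hatGuessingWins_completeBipartiteGraph_two_two.mono_isContained
      (completeBipartiteGraph_isContained_of_embedding Fin.castSuccEmb Fin.castSuccEmb)
  · intro q hq
    by_contra! h
    exact not_hatGuessingWins_completeBipartiteGraph_three_three (hq.anti four_ne_zero h)
end

section
/- If four 3 × 3 × 3 combinatorial cubes in (Fin 4)³ have a two-intersection of at most 29 points, then their two-intersection is either a 3 × 3 × 3 combinatorial cube or a 3 × 3 × 3 combinatorial cube with one point removed. -/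
/-- A point of the `4 × 4 × 4` grid. -/
abbrev GridPt : Type := Fin 4 × Fin 4 × Fin 4

/-- A `3 × 3 × 3` combinatorial cube in `(Fin 4)³`: a product `A ×ˢ B ×ˢ C` with
`|A| = |B| = |C| = 3`. -/
def IsCube (D : Finset GridPt) : Prop :=
  ∃ A B C : Finset (Fin 4), A.card = 3 ∧ B.card = 3 ∧ C.card = 3 ∧ D = A ×ˢ B ×ˢ C

/-- A `2 × 3 × 3` combinatorial prism in `(Fin 4)³`: a product `A ×ˢ B ×ˢ C` whose side
sizes are `2, 3, 3` in some order. -/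
def IsPrism233 (D : Finset GridPt) : Prop :=
  ∃ A B C : Finset (Fin 4),
    ({A.card, B.card, C.card} : Multiset ℕ) = ({2, 3, 3} : Multiset ℕ) ∧ D = A ×ˢ B ×ˢ C

/-- The two-intersection of a family of sets: all points lying in at least two sets of
the family (counted with indices). -/
def twoInter {α : Type*} [Fintype α] [DecidableEq α] {n : ℕ} (S : Fin n → Finset α) :
    Finset α :=
  Finset.univ.filter (fun p => ∃ i j : Fin n, i ≠ j ∧ p ∈ S i ∧ p ∈ S j)

/-!
Let the `i`-th cube miss the values `a i`, `b i`, `c i`. If no value is taken by three of the `a i`,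
then a line in the first direction that meets `r ≥ 2` of the cubes contains at least `r` points of
the two-intersection. Along this direction the cubes project to four `3 × 3` squares in a `4 × 4`
grid, which have 36 incidences with its cells, and at most 6 cells lie in exactly one square. Hence
the two-intersection has at least `36 - 6 = 30` points.

So if it has at most 29 points, then in each direction three of the cubes miss the same value, and
these common values `x`, `y`, `z` define a cube `D` containing the two-intersection. Call the
remaining cube of each direction exceptional there. Any cube missing a point of `D` misses it in a
direction where that cube is exceptional, so a point of `D` in at most one of the four cubes agrees
in each direction with the value missed by the exceptional cube. There is at most one such point.
-/

namespace FourCubes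

open Finset

section Avoiding

variable {ι α : Type*} [DecidableEq α]

/-- The indices `i ∈ R` whose value `a i` differs from `x`. When `a i` is the coordinate missed by
the `i`-th cube, these are the cubes of `R` whose projection contains `x`; iterating `avoiding`
over the coordinates cuts the family down to the cubes through a given point. -/
def avoiding (R : Finset ι) (a : ι → α) (x : α) : Finset ι := {i ∈ R | a i ≠ x}

lemma mem_avoiding {R : Finset ι} {a : ι → α} {x : α} {i : ι} :
    i ∈ avoiding R a x ↔ i ∈ R ∧ a i ≠ x := by
  simp only [avoiding, mem_filter]

lemma card_fiber_add_card_avoiding (R : Finset ι) (a : ι → α) (x : α) :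
    #{i ∈ R | a i = x} + #(avoiding R a x) = #R :=
  card_filter_add_card_filter_not _

variable [Fintype α]

lemma sum_card_avoiding (R : Finset ι) (a : ι → α) :
    ∑ x, #(avoiding R a x) = #R * (Fintype.card α - 1) := by
  have fiber_compl (i : ι) : #{x | a i ≠ x} = Fintype.card α - 1 := by
    rw [filter_ne, card_erase_of_mem (mem_univ _), card_univ]
  calc ∑ x, #(avoiding R a x) = ∑ i ∈ R, #{x | a i ≠ x} :=
        (sum_card_bipartiteAbove_eq_sum_card_bipartiteBelow _).symm
    _ = #R * (Fintype.card α - 1) := by simp only [fiber_compl, sum_const, smul_eq_mul]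

lemma sum_sum_card_avoiding {β : Type*} [DecidableEq β] [Fintype β] (R : Finset ι) (a : ι → α)
    (b : ι → β) :
    ∑ x, ∑ y, #(avoiding (avoiding R a x) b y) =
      #R * (Fintype.card α - 1) * (Fintype.card β - 1) := by
  simp only [sum_card_avoiding, ← sum_mul]

-- The fibers over the values counted on the left are disjoint, each of size at least `#R - 1`.
lemma card_avoiding_le_one_mul_le (R : Finset ι) (a : ι → α) :
    #{x | #(avoiding R a x) ≤ 1} * (#R - 1) ≤ #R := by
  calc #{x | #(avoiding R a x) ≤ 1} * (#R - 1)
      ≤ ∑ x with #(avoiding R a x) ≤ 1, #{i ∈ R | a i = x} := by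
        rw [← smul_eq_mul]
        refine card_nsmul_le_sum _ _ _ fun x hx => ?_
        have := card_fiber_add_card_avoiding R a x
        have := (mem_filter.mp hx).2
        omega
    _ = #{i ∈ R | a i ∈ ({x | #(avoiding R a x) ≤ 1} : Finset α)} :=
        sum_card_fiberwise_eq_card_filter _ _ _
    _ ≤ #R := card_filter_le _ _

lemma card_avoiding_le_one_add_card_le [Fintype ι] {a : ι → α} (hι : 4 ≤ Fintype.card ι)
    (ha : ∀ x, 2 ≤ #(avoiding univ a x)) {R : Finset ι} (hR : 2 ≤ #R) :
    #{x | #(avoiding R a x) ≤ 1} + #R ≤ Fintype.card ι := by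
  obtain rfl | hR_univ := eq_or_ne R univ
  · have none : #{x | #(avoiding univ a x) ≤ 1} = 0 := by
      rw [card_eq_zero, filter_eq_empty_iff]
      exact fun x _ => not_le.mpr (ha x)
    rw [none, zero_add, card_univ]
  · have hR_lt : #R < Fintype.card ι := (card_lt_iff_ne_univ R).mpr hR_univ
    have few := card_avoiding_le_one_mul_le R a
    obtain hR_two | hR_three : #R = 2 ∨ 3 ≤ #R := by omega
    · rw [hR_two] at few ⊢
      omega
    · suffices #{x | #(avoiding R a x) ≤ 1} ≤ 1 by omega
      by_contra! h
      have := Nat.mul_le_mul_right (#R - 1) h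
      omega

lemma card_le_card_two_le_card_avoiding [Fintype ι] {a : ι → α} (hι : 4 ≤ Fintype.card ι)
    (hα : Fintype.card ι ≤ Fintype.card α) (ha : ∀ x, 2 ≤ #(avoiding univ a x))
    {R : Finset ι} (hR : 2 ≤ #R) : #R ≤ #{x | 2 ≤ #(avoiding R a x)} := by
  have split : #{x | #(avoiding R a x) ≤ 1} + #{x | 2 ≤ #(avoiding R a x)} = Fintype.card α := by
    simpa only [not_le, ← Nat.succ_le_iff, card_univ] using
      card_filter_add_card_filter_not (s := univ) fun x => #(avoiding R a x) ≤ 1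
  have := card_avoiding_le_one_add_card_le hι ha hR
  omega

lemma card_avoiding_eq_one_mul_le (R : Finset ι) (a : ι → α) :
    #{x | #(avoiding R a x) = 1} * (#R - 1) ≤ #R :=
  (Nat.mul_le_mul_right _ (card_le_card (monotone_filter_right _ fun _ _ h => h.le))).trans
    (card_avoiding_le_one_mul_le R a)

lemma two_mul_card_avoiding_eq_one_add_card_le {R : Finset ι} (hR : 2 ≤ #R) (hR' : #R ≤ 4)
    (a : ι → α) : 2 * #{x | #(avoiding R a x) = 1} + #R ≤ 6 := by
  have := card_avoiding_eq_one_mul_le R a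
  interval_cases #R <;> omega

lemma card_avoiding_eq_one_lt (hα : 3 ≤ Fintype.card α) (R : Finset ι) (a : ι → α) :
    #{x | #(avoiding R a x) = 1} < Fintype.card α := by
  obtain hR | hR | hR : #R = 0 ∨ #R = 1 ∨ 2 ≤ #R := by omega
  · rw [card_eq_zero] at hR
    simp only [hR, avoiding, filter_empty, card_empty, zero_ne_one, filter_false]
    omega
  · obtain ⟨i, rfl⟩ := card_eq_one.mp hR
    exact card_lt_univ_of_notMem (x := a i) (by simp [avoiding, filter_singleton])
  · have := card_avoiding_eq_one_mul_le R a
    by_contra! h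
    have := Nat.mul_le_mul_right (#R - 1) (hα.trans h)
    omega

end Avoiding

lemma sum_card_avoiding_eq_one_le_six (b c : Fin 4 → Fin 4) :
    ∑ y, #{z | #(avoiding (avoiding univ b y) c z) = 1} ≤ 6 := by
  have total : ∑ y, #(avoiding univ b y) = 12 := sum_card_avoiding univ b
  have row (y) : #(avoiding univ b y) ≤ 4 ∧ #{z | #(avoiding (avoiding univ b y) c z) = 1} ≤ 3 ∧
      (2 ≤ #(avoiding univ b y) →
        2 * #{z | #(avoiding (avoiding univ b y) c z) = 1} + #(avoiding univ b y) ≤ 6) :=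
    ⟨card_finset_fin_le _, Nat.lt_succ_iff.mp (card_avoiding_eq_one_lt (by simp) _ c),
      fun h => two_mul_card_avoiding_eq_one_add_card_le h (card_finset_fin_le _) c⟩
  -- If some row meets at most one square, then `total` forces every other row to meet at least
  -- three, hence to have at most one cell in exactly one square; otherwise add the bounds `6`.
  rw [Fin.sum_univ_four] at total ⊢
  have := row 0
  have := row 1
  have := row 2
  have := row 3
  omega

lemma thirty_le_sum_card_two_le_card_avoiding (a b c : Fin 4 → Fin 4)
    (ha : ∀ x, 2 ≤ #(avoiding univ a x)) :
    30 ≤ ∑ y, ∑ z, #{x | 2 ≤ #(avoiding (avoiding (avoiding univ b y) c z) a x)} := by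
  have line (R : Finset (Fin 4)) :
      #R ≤ #{x | 2 ≤ #(avoiding R a x)} + if #R = 1 then 1 else 0 := by
    by_cases hR : 2 ≤ #R
    · exact le_add_right (card_le_card_two_le_card_avoiding le_rfl le_rfl ha hR)
    · split_ifs <;> omega
  have incidences : ∑ y, ∑ z, #(avoiding (avoiding univ b y) c z) = 36 :=
    sum_sum_card_avoiding univ b c
  have total :
      36 ≤ ∑ y, ∑ z, #{x | 2 ≤ #(avoiding (avoiding (avoiding univ b y) c z) a x)} +
        ∑ y, #{z | #(avoiding (avoiding univ b y) c z) = 1} := by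
    rw [← incidences, ← sum_add_distrib]
    refine sum_le_sum fun y _ => ?_
    rw [card_filter fun z => #(avoiding (avoiding univ b y) c z) = 1, ← sum_add_distrib]
    exact sum_le_sum fun z _ => line _
  have := sum_card_avoiding_eq_one_le_six b c
  omega

lemma mem_twoInter {α : Type*} [Fintype α] [DecidableEq α] {n : ℕ} {S : Fin n → Finset α} {p : α} :
    p ∈ twoInter S ↔ 2 ≤ #{i | p ∈ S i} := by
  simp only [twoInter, mem_filter, mem_univ, true_and, Nat.succ_le_iff, one_lt_card_iff]
  grind

/-- The `3 × 3 × 3` cube of the points that differ from `q` in every coordinate. Every cube has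
this form, for a unique `q`. -/
def cubeAvoiding (q : GridPt) : Finset GridPt := {q.1}ᶜ ×ˢ {q.2.1}ᶜ ×ˢ {q.2.2}ᶜ

lemma mem_cubeAvoiding {p q : GridPt} :
    p ∈ cubeAvoiding q ↔ q.1 ≠ p.1 ∧ q.2.1 ≠ p.2.1 ∧ q.2.2 ≠ p.2.2 := by
  simp only [cubeAvoiding, mem_product, mem_compl, mem_singleton, ne_comm, ne_eq]

lemma card_eq_three_iff {A : Finset (Fin 4)} : #A = 3 ↔ ∃ x, A = {x}ᶜ := by
  have := card_add_card_compl A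
  rw [Fintype.card_fin] at this
  simp only [eq_compl_comm (x := A), eq_comm (b := Aᶜ), ← card_eq_one]
  omega

lemma isCube_iff {D : Finset GridPt} : IsCube D ↔ ∃ q, D = cubeAvoiding q := by
  simp only [IsCube, card_eq_three_iff, cubeAvoiding, Prod.exists]
  grind

lemma mem_twoInter_cubeAvoiding {n : ℕ} {q : Fin n → GridPt} {p : GridPt} :
    p ∈ twoInter (fun i => cubeAvoiding (q i)) ↔
      2 ≤ #(avoiding (avoiding (avoiding univ (fun i => (q i).2.1) p.2.1)
        (fun i => (q i).2.2) p.2.2) (fun i => (q i).1) p.1) := by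
  rw [mem_twoInter]
  congr! 2
  ext i
  simp only [mem_filter, mem_univ, true_and, mem_cubeAvoiding, mem_avoiding]
  tauto

lemma thirty_le_card_twoInter (q : Fin 4 → GridPt)
    (h : ∀ x, 2 ≤ #(avoiding univ (fun i => (q i).1) x)) :
    30 ≤ #(twoInter fun i => cubeAvoiding (q i)) := by
  calc 30 ≤ ∑ y, ∑ z, #{x | 2 ≤ #(avoiding (avoiding (avoiding univ (fun i => (q i).2.1) y)
          (fun i => (q i).2.2) z) (fun i => (q i).1) x)} :=
        thirty_le_sum_card_two_le_card_avoiding _ _ _ h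
    _ = #(twoInter fun i => cubeAvoiding (q i)) := by
        rw [← filter_univ_mem (twoInter _)]
        simp only [mem_twoInter_cubeAvoiding, card_filter _ univ, Fintype.sum_prod_type_right]
        exact sum_comm

/-- The cyclic permutation of the three coordinates. -/
def rotate : GridPt ≃ GridPt := (Equiv.prodComm _ _).trans (Equiv.prodAssoc _ _ _)

lemma card_twoInter_rotate {n : ℕ} (q : Fin n → GridPt) :
    #(twoInter fun i => cubeAvoiding (rotate (q i))) = #(twoInter fun i => cubeAvoiding (q i)) := by
  refine (card_equiv rotate fun p => ?_).symm
  simp only [mem_twoInter, mem_cubeAvoiding, rotate, Equiv.trans_apply, Equiv.prodComm_apply,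
    Prod.swap, Equiv.prodAssoc_apply, and_comm, and_left_comm]

lemma exists_card_avoiding_le_one {q : Fin 4 → GridPt}
    (h : #(twoInter fun i => cubeAvoiding (q i)) ≤ 29) :
    ∃ p : GridPt, #(avoiding univ (fun i => (q i).1) p.1) ≤ 1 ∧
      #(avoiding univ (fun i => (q i).2.1) p.2.1) ≤ 1 ∧
      #(avoiding univ (fun i => (q i).2.2) p.2.2) ≤ 1 := by
  have first (q' : Fin 4 → GridPt) (h' : #(twoInter fun i => cubeAvoiding (q' i)) ≤ 29) :
      ∃ x, #(avoiding univ (fun i => (q' i).1) x) ≤ 1 := by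
    by_contra! hx
    have := thirty_le_card_twoInter q' hx
    omega
  obtain ⟨x, hx⟩ := first q h
  have h' := (card_twoInter_rotate q).trans_le h
  obtain ⟨y, hy⟩ := first (fun i => rotate (q i)) h'
  obtain ⟨z, hz⟩ := first (fun i => rotate (rotate (q i)))
    ((card_twoInter_rotate fun i => rotate (q i)).trans_le h')
  exact ⟨(x, y, z), hx, hy, hz⟩

lemma exists_notMem_of_card_le_one {ι : Type*} [Fintype ι] (hι : 4 ≤ Fintype.card ι)
    {s t u : Finset ι} (hs : #s ≤ 1) (ht : #t ≤ 1) (hu : #u ≤ 1) :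
    ∃ i, i ∉ s ∧ i ∉ t ∧ i ∉ u := by
  classical
  have : #(s ∪ (t ∪ u)) < #(univ : Finset ι) := by
    have := card_union_le s (t ∪ u)
    have := card_union_le t u
    rw [card_univ]
    omega
  obtain ⟨i, -, hi⟩ := exists_mem_notMem_of_card_lt_card this
  simp only [mem_union, not_or] at hi
  exact ⟨i, hi⟩

section Majority

variable {n : ℕ} {q : Fin n → GridPt} {p : GridPt}
  (h₁ : #(avoiding univ (fun i => (q i).1) p.1) ≤ 1)
  (h₂ : #(avoiding univ (fun i => (q i).2.1) p.2.1) ≤ 1)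
  (h₃ : #(avoiding univ (fun i => (q i).2.2) p.2.2) ≤ 1)

include h₁ h₂ h₃

lemma twoInter_subset_cubeAvoiding : (twoInter fun i => cubeAvoiding (q i)) ⊆ cubeAvoiding p := by
  intro r hr
  have not_subset {s : Finset (Fin n)} (hs : #s ≤ 1) :
      ¬ ({i | r ∈ cubeAvoiding (q i)} : Finset (Fin n)) ⊆ s := fun hsub =>
    ((mem_twoInter.mp hr).trans (card_le_card hsub)).not_gt (Nat.lt_succ_of_le hs)
  have avoids {i : Fin n} (hi : i ∈ ({i | r ∈ cubeAvoiding (q i)} : Finset (Fin n))) :=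
    mem_cubeAvoiding.mp ((mem_filter_univ i).mp hi)
  rw [mem_cubeAvoiding]
  exact ⟨fun h => not_subset h₁ fun i hi => mem_avoiding.mpr ⟨mem_univ i, h ▸ (avoids hi).1⟩,
    fun h => not_subset h₂ fun i hi => mem_avoiding.mpr ⟨mem_univ i, h ▸ (avoids hi).2.1⟩,
    fun h => not_subset h₃ fun i hi => mem_avoiding.mpr ⟨mem_univ i, h ▸ (avoids hi).2.2⟩⟩

lemma exists_mem_avoiding_eq (hn : 4 ≤ n) {r : GridPt} (hr : r ∈ cubeAvoiding p)
    (hr' : r ∉ twoInter fun i => cubeAvoiding (q i)) :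
    (∃ i ∈ avoiding univ (fun i => (q i).1) p.1, (q i).1 = r.1) ∧
      (∃ i ∈ avoiding univ (fun i => (q i).2.1) p.2.1, (q i).2.1 = r.2.1) ∧
      ∃ i ∈ avoiding univ (fun i => (q i).2.2) p.2.2, (q i).2.2 = r.2.2 := by
  have few : #{i | r ∈ cubeAvoiding (q i)} ≤ 1 := by
    rwa [mem_twoInter, not_le, Nat.lt_succ_iff] at hr'
  have hcard : 4 ≤ Fintype.card (Fin n) := by rwa [Fintype.card_fin]
  -- A cube that is exceptional in neither of two directions and does not contain `r` can only miss
  -- `r` in the third direction.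
  obtain ⟨i, hi, hi₂, hi₃⟩ := exists_notMem_of_card_le_one hcard few h₂ h₃
  obtain ⟨j, hj, hj₁, hj₃⟩ := exists_notMem_of_card_le_one hcard few h₁ h₃
  obtain ⟨k, hk, hk₁, hk₂⟩ := exists_notMem_of_card_le_one hcard few h₁ h₂
  simp only [mem_filter_univ, mem_avoiding, mem_univ, true_and, mem_cubeAvoiding] at *
  grind

lemma card_cubeAvoiding_sdiff_twoInter_le_one (hn : 4 ≤ n) :
    #(cubeAvoiding p \ twoInter fun i => cubeAvoiding (q i)) ≤ 1 := by
  rw [card_le_one]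
  intro r hr s hs
  rw [mem_sdiff] at hr hs
  obtain ⟨⟨i, hi, hir⟩, ⟨j, hj, hjr⟩, ⟨k, hk, hkr⟩⟩ := exists_mem_avoiding_eq h₁ h₂ h₃ hn hr.1 hr.2
  obtain ⟨⟨i', hi', his⟩, ⟨j', hj', hjs⟩, ⟨k', hk', hks⟩⟩ :=
    exists_mem_avoiding_eq h₁ h₂ h₃ hn hs.1 hs.2
  obtain rfl := card_le_one.mp h₁ i hi i' hi'
  obtain rfl := card_le_one.mp h₂ j hj j' hj'
  obtain rfl := card_le_one.mp h₃ k hk k' hk'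
  exact Prod.ext (hir.symm.trans his) (Prod.ext (hjr.symm.trans hjs) (hkr.symm.trans hks))

end Majority

lemma eq_or_eq_erase_of_card_sdiff_le_one {α : Type*} [DecidableEq α] {s t : Finset α}
    (hst : s ⊆ t) (h : #(t \ s) ≤ 1) : s = t ∨ ∃ x ∈ t, s = t.erase x := by
  obtain h | h := Nat.le_one_iff_eq_zero_or_eq_one.mp h
  · exact .inl (hst.antisymm (sdiff_eq_empty_iff_subset.mp (card_eq_zero.mp h)))
  · obtain ⟨x, hx⟩ := card_eq_one.mp h
    refine .inr ⟨x, (mem_sdiff.mp (hx ▸ mem_singleton_self x)).1, ?_⟩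
    rw [erase_eq, ← hx, Finset.sdiff_sdiff_eq_self hst]

end FourCubes

open FourCubes in
/-- If four `3 × 3 × 3` cubes in `(Fin 4)³` two-intersect in at most 29 points, then
their two-intersection is a `3 × 3 × 3` cube or a `3 × 3 × 3` cube missing one point. -/
theorem twoInter_four_cubes (C : Fin 4 → Finset GridPt) (hC : ∀ i, IsCube (C i))
    (h : (twoInter C).card ≤ 29) :
    IsCube (twoInter C) ∨
      ∃ (D : Finset GridPt) (p : GridPt), IsCube D ∧ p ∈ D ∧ twoInter C = D.erase p := by
  choose q hq using fun i => isCube_iff.mp (hC i)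
  obtain rfl : C = fun i => cubeAvoiding (q i) := funext hq
  obtain ⟨p, h₁, h₂, h₃⟩ := exists_card_avoiding_le_one h
  have hp : IsCube (cubeAvoiding p) := isCube_iff.mpr ⟨p, rfl⟩
  obtain heq | ⟨r, hr, heq⟩ := eq_or_eq_erase_of_card_sdiff_le_one
    (twoInter_subset_cubeAvoiding h₁ h₂ h₃)
    (card_cubeAvoiding_sdiff_twoInter_le_one h₁ h₂ h₃ le_rfl)
  · exact .inl (heq ▸ hp)
  · exact .inr ⟨_, r, hp, hr, heq⟩
end

section
/- Any four pairwise distinct 3 × 3 combinatorial squares in (Fin 4)² have a two-intersection of at least 12 points. -/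
/-!
A square omits one row and one column, so it is the complement of a cross, and a point `p` lies in
the square centred at `c` exactly when `c` is not on the cross of `p`. Hence a point outside the
two-intersection is one whose cross covers all but at most one of the centres.

If all centres but one lie on a line, then every such point lies on that line. Otherwise, since two
distinct crosses meet in a line or in two points, the three or more centres that remain after
omitting one are covered by at most one cross; so there is at most one such point for each omitted
centre.
-/

/-- A `3 × 3` combinatorial square in `(Fin 4)²`: a product `A ×ˢ B` with
`|A| = |B| = 3`. -/
def IsSquare33 (D : Finset (Fin 4 × Fin 4)) : Prop :=
  ∃ A B : Finset (Fin 4), A.card = 3 ∧ B.card = 3 ∧ D = A ×ˢ B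

section Crosses

open Finset

variable {α β : Type*} [Fintype α] [Fintype β] [DecidableEq α] [DecidableEq β]

/-- The cross centred at `c` in the grid `α × β`: the union of the row and the column through `c`,
where the row is the set of points with first coordinate `c.1`. -/
def cross (c : α × β) : Finset (α × β) :=
  {p | p.1 = c.1 ∨ p.2 = c.2}

theorem mem_cross {p c : α × β} : p ∈ cross c ↔ p.1 = c.1 ∨ p.2 = c.2 := by
  simp [cross]

theorem mem_cross_comm {p c : α × β} : p ∈ cross c ↔ c ∈ cross p := by
  simp only [mem_cross, eq_comm]

theorem compl_cross (c : α × β) : (cross c)ᶜ = ({c.1}ᶜ : Finset α) ×ˢ ({c.2}ᶜ : Finset β) := by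
  ext p
  simp [mem_cross]

theorem fst_eq_of_subset_cross {T : Finset (α × β)} {x : α} {p : α × β} (hT : T.Nontrivial)
    (hx : ∀ t ∈ T, t.1 = x) (hp : T ⊆ cross p) : p.1 = x := by
  by_contra hne
  have hT_eq : ∀ t ∈ T, t = (x, p.2) := fun t ht ↦
    Prod.ext (hx t ht) ((mem_cross.mp (hp ht)).resolve_left fun h ↦ hne (h ▸ hx t ht))
  obtain ⟨s, hs, t, ht, hst⟩ := hT
  exact hst ((hT_eq s hs).trans (hT_eq t ht).symm)

theorem snd_eq_of_subset_cross {T : Finset (α × β)} {y : β} {p : α × β} (hT : T.Nontrivial)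
    (hy : ∀ t ∈ T, t.2 = y) (hp : T ⊆ cross p) : p.2 = y := by
  by_contra hne
  have hT_eq : ∀ t ∈ T, t = (p.1, y) := fun t ht ↦
    Prod.ext ((mem_cross.mp (hp ht)).resolve_right fun h ↦ hne (h ▸ hy t ht)) (hy t ht)
  obtain ⟨s, hs, t, ht, hst⟩ := hT
  exact hst ((hT_eq s hs).trans (hT_eq t ht).symm)

theorem cross_inter_cross {p q : α × β} (h₁ : p.1 ≠ q.1) (h₂ : p.2 ≠ q.2) :
    cross p ∩ cross q = {(p.1, q.2), (q.1, p.2)} := by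
  ext t
  simp only [mem_inter, mem_cross, mem_insert, mem_singleton, Prod.ext_iff]
  grind

theorem eq_of_subset_cross {T : Finset (α × β)} {p q : α × β} (hT : 2 < #T)
    (hrow : ¬∃ x, ∀ t ∈ T, t.1 = x) (hcol : ¬∃ y, ∀ t ∈ T, t.2 = y)
    (hp : T ⊆ cross p) (hq : T ⊆ cross q) : p = q := by
  have hcommon : p.1 = q.1 ∨ p.2 = q.2 := by
    by_contra! hne
    have hT_le : #T ≤ #{(p.1, q.2), (q.1, p.2)} :=
      card_le_card (cross_inter_cross hne.1 hne.2 ▸ subset_inter hp hq)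
    exact hT.not_ge (hT_le.trans card_le_two)
  by_contra hne
  rcases hcommon with h₁ | h₂
  · refine hrow ⟨p.1, fun t ht ↦ ?_⟩
    have := mem_cross.mp (hp ht)
    have := mem_cross.mp (hq ht)
    grind
  · refine hcol ⟨p.2, fun t ht ↦ ?_⟩
    have := mem_cross.mp (hp ht)
    have := mem_cross.mp (hq ht)
    grind

/-- The points whose cross covers all of `P` except possibly one point. For `P` the set of centres
of a family of complements of crosses, these are the points outside its two-intersection. -/
def almostCovering (P : Finset (α × β)) : Finset (α × β) :=
  {p | ∃ a ∈ P, P.erase a ⊆ cross p}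

theorem mem_almostCovering {P : Finset (α × β)} {p : α × β} :
    p ∈ almostCovering P ↔ ∃ a ∈ P, P.erase a ⊆ cross p := by
  simp [almostCovering]

theorem exists_nontrivial_subset_cross {P : Finset (α × β)} {p : α × β} (hP : 4 ≤ #P)
    (hp : p ∈ almostCovering P) (a : α × β) :
    ∃ T ⊆ P.erase a, T.Nontrivial ∧ T ⊆ cross p := by
  obtain ⟨b, -, hb⟩ := mem_almostCovering.mp hp
  refine ⟨(P.erase a).erase b, erase_subset _ _, ?_, ?_⟩
  · rw [← one_lt_card_iff_nontrivial]
    have := pred_card_le_card_erase (s := P) (a := a)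
    have := pred_card_le_card_erase (s := P.erase a) (a := b)
    omega
  · exact (erase_subset_erase b (erase_subset a P)).trans hb

theorem card_almostCovering_le_of_row {P : Finset (α × β)} {a : α × β} {x : α} (hP : 4 ≤ #P)
    (hx : ∀ t ∈ P.erase a, t.1 = x) : #(almostCovering P) ≤ Fintype.card β := by
  have hsub : almostCovering P ⊆ {x} ×ˢ univ := fun p hp ↦ by
    obtain ⟨T, hTP, hT, hTp⟩ := exists_nontrivial_subset_cross hP hp a
    have hpx : p.1 = x := fst_eq_of_subset_cross hT (fun t ht ↦ hx t (hTP ht)) hTp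
    exact mem_product.mpr ⟨mem_singleton.mpr hpx, mem_univ _⟩
  simpa using card_le_card hsub

theorem card_almostCovering_le_of_column {P : Finset (α × β)} {a : α × β} {y : β} (hP : 4 ≤ #P)
    (hy : ∀ t ∈ P.erase a, t.2 = y) : #(almostCovering P) ≤ Fintype.card α := by
  have hsub : almostCovering P ⊆ univ ×ˢ {y} := fun p hp ↦ by
    obtain ⟨T, hTP, hT, hTp⟩ := exists_nontrivial_subset_cross hP hp a
    have hpy : p.2 = y := snd_eq_of_subset_cross hT (fun t ht ↦ hy t (hTP ht)) hTp
    exact mem_product.mpr ⟨mem_univ _, mem_singleton.mpr hpy⟩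
  simpa using card_le_card hsub

theorem card_almostCovering_le_card {P : Finset (α × β)} (hP : 4 ≤ #P)
    (hrow : ∀ a ∈ P, ¬∃ x, ∀ t ∈ P.erase a, t.1 = x)
    (hcol : ∀ a ∈ P, ¬∃ y, ∀ t ∈ P.erase a, t.2 = y) : #(almostCovering P) ≤ #P := by
  have hunion : almostCovering P = P.biUnion fun a ↦ {p | P.erase a ⊆ cross p} := by
    ext p
    simp [mem_almostCovering]
  have hunique : ∀ a ∈ P, #{p | P.erase a ⊆ cross p} ≤ 1 := fun a ha ↦ by
    have herase : 2 < #(P.erase a) := by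
      rw [card_erase_of_mem ha]
      omega
    refine card_le_one.mpr fun p hp q hq ↦ ?_
    exact eq_of_subset_cross herase (hrow a ha) (hcol a ha) (by simpa using hp) (by simpa using hq)
  simpa [hunion] using card_biUnion_le_card_mul P _ 1 hunique

theorem card_almostCovering_le_max {P : Finset (α × β)} (hP : 4 ≤ #P) :
    #(almostCovering P) ≤ max #P (max (Fintype.card α) (Fintype.card β)) := by
  by_cases hrow : ∃ a ∈ P, ∃ x, ∀ t ∈ P.erase a, t.1 = x
  · obtain ⟨a, -, x, hx⟩ := hrow
    exact le_max_of_le_right (le_max_of_le_right (card_almostCovering_le_of_row hP hx))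
  by_cases hcol : ∃ a ∈ P, ∃ y, ∀ t ∈ P.erase a, t.2 = y
  · obtain ⟨a, -, y, hy⟩ := hcol
    exact le_max_of_le_right (le_max_of_le_left (card_almostCovering_le_of_column hP hy))
  · exact le_max_of_le_left (card_almostCovering_le_card hP
      (fun a ha h ↦ hrow ⟨a, ha, h⟩) (fun a ha h ↦ hcol ⟨a, ha, h⟩))

theorem notMem_twoInter_iff {n : ℕ} [NeZero n] {S : Fin n → Finset α} {p : α} :
    p ∉ twoInter S ↔ ∃ i, ∀ j ≠ i, p ∉ S j := by
  simp only [twoInter, mem_filter, mem_univ, true_and]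
  constructor
  · intro h
    by_cases hp : ∃ i, p ∈ S i
    · obtain ⟨i, hi⟩ := hp
      exact ⟨i, fun j hji hj ↦ h ⟨j, i, hji, hj, hi⟩⟩
    · exact ⟨0, fun j _ hj ↦ hp ⟨j, hj⟩⟩
  · rintro ⟨i, hi⟩ ⟨j, k, hjk, hj, hk⟩
    have hji : j = i := by_contra fun h ↦ hi j h hj
    have hki : k = i := by_contra fun h ↦ hi k h hk
    exact hjk (hji.trans hki.symm)

theorem compl_twoInter_compl_cross {n : ℕ} [NeZero n] {c : Fin n → α × β}
    (hc : Function.Injective c) :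
    (twoInter fun i ↦ (cross (c i))ᶜ)ᶜ = almostCovering (univ.image c) := by
  ext p
  simp only [mem_compl, notMem_twoInter_iff, not_not, mem_almostCovering, exists_mem_image,
    mem_univ, true_and, ← image_erase hc, image_subset_iff, mem_erase, and_true,
    mem_cross_comm (p := p)]

theorem exists_eq_compl_singleton {A : Finset α} (hA : #A + 1 = Fintype.card α) :
    ∃ a, A = {a}ᶜ := by
  have hcompl : #Aᶜ = 1 := by
    rw [card_compl]
    omega
  obtain ⟨a, ha⟩ := card_eq_one.mp hcompl
  exact ⟨a, by rw [← ha, compl_compl]⟩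

theorem IsSquare33.exists_eq_compl_cross {D : Finset (Fin 4 × Fin 4)} (hD : IsSquare33 D) :
    ∃ c, D = (cross c)ᶜ := by
  obtain ⟨A, B, hA, hB, rfl⟩ := hD
  obtain ⟨a, rfl⟩ := exists_eq_compl_singleton (A := A) (by simp [hA])
  obtain ⟨b, rfl⟩ := exists_eq_compl_singleton (A := B) (by simp [hB])
  exact ⟨(a, b), (compl_cross (a, b)).symm⟩

theorem twoInter_four_squares_general {n : ℕ} (hn : 4 ≤ n) (S : Fin n → Finset (α × β))
    (hS : ∀ i, ∃ c, S i = (cross c)ᶜ) (hdist : ∀ i j, i ≠ j → S i ≠ S j) :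
    #(twoInter S)ᶜ ≤ max n (max (Fintype.card α) (Fintype.card β)) := by
  have : NeZero n := ⟨by omega⟩
  choose c hc using hS
  obtain rfl : S = fun i ↦ (cross (c i))ᶜ := funext hc
  have hinj : Function.Injective c := fun i j hij ↦
    by_contra fun hne ↦ hdist i j hne (by simp only [hij])
  have hcard : #(univ.image c) = n := by
    rw [card_image_of_injective _ hinj, card_univ, Fintype.card_fin]
  have hle := card_almostCovering_le_max (hn.trans_eq hcard.symm)
  rwa [hcard, ← compl_twoInter_compl_cross hinj] at hle

end Crosses

/-- Four pairwise distinct `3 × 3` combinatorial squares in `(Fin 4)²` two-intersect in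
at least 12 points. -/
theorem twoInter_four_squares (S : Fin 4 → Finset (Fin 4 × Fin 4))
    (hS : ∀ i, IsSquare33 (S i)) (hdist : ∀ i j, i ≠ j → S i ≠ S j) :
    12 ≤ (twoInter S).card := by
  have h := twoInter_four_squares_general le_rfl S (fun i ↦ (hS i).exists_eq_compl_cross) hdist
  grind [Finset.card_compl, Fintype.card_prod, Fintype.card_fin]
end
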